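/- arXiv:2409.00943 — 2 statements merged into one kernel-verified Lean document; each statement's English description precedes it below -/
import Mathlib

section
/- Let n ≥ m ≥ 1 and let λ = (λ_1, ..., λ_k) be a partition of n+m with λ_k = 1. Then [s_λ]X_{GN_{n,m}} = m·[s_{λ∖1}]X_{GN_{n−1,m−1} ⊔ K_1} + (n−m)·[s_{λ∖1}]X_{GN_{n−1,m}} + m·A, where K_1 is a single isolated vertex, ⊔ denotes disjoint union of graphs, the middle term is interpreted as 0 when n = m (its coefficient n−m is then 0), and A = [s_{λ∖1²}]X_{GN_{n−1,m−1}} if λ has at least two trailing parts equal to 1 (i.e., λ_{k−1} = 1), and A = 0 otherwise. -/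
open scoped Classical

/-! ### Cells and Young diagrams -/

/-- A cell of a Young diagram: `(row, column)`, both 0-indexed, rows from the top. -/
abbrev Cell : Type := ℕ × ℕ

/-- The length of row `i` (0-indexed from the top) of the Young diagram of the
partition `lam`, whose parts are arranged in weakly decreasing order. -/
def rowLen {N : ℕ} (lam : Nat.Partition N) (i : ℕ) : ℕ :=
  ((lam.parts.sort (· ≤ ·)).reverse).getD i 0

/-- The Young diagram of a partition, as a set of cells. -/
def diag {N : ℕ} (lam : Nat.Partition N) : Set Cell :=
  {c : Cell | c.2 < rowLen lam c.1}

/-- The number of rows (the length) of a partition. -/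
def numRows {N : ℕ} (lam : Nat.Partition N) : ℕ := Multiset.card lam.parts

/-! ### Chromatic symmetric functions and Schur functions, as monomial-coefficient
functions.  A formal power series of bounded degree in the commuting variables
`x_0, x_1, x_2, …` is recorded by the map sending an exponent vector `μ : ℕ → ℕ`
(only finitely many nonzero entries ever matter) to the coefficient of the monomial
`∏ i, x_i ^ μ i`.  Colors / tableau entries are positive integers, so the variable
`x_0` is never used. -/

/-- A proper coloring of `G` by positive integers. -/
def IsProperColoring {V : Type*} (G : SimpleGraph V) (f : V → ℕ) : Prop :=
  (∀ v, 0 < f v) ∧ ∀ u v, G.Adj u v → f u ≠ f v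

/-- The coefficient of the monomial `∏ i, x_i ^ μ i` in the chromatic symmetric
function `X_G = ∑_{proper colorings f} ∏_{v} x_{f v}`. -/
noncomputable def XCoeff {V : Type*} [Fintype V] (G : SimpleGraph V) (μ : ℕ → ℕ) : ℚ :=
  Nat.card {f : V → ℕ //
    IsProperColoring G f ∧ ∀ i, Nat.card {v : V // f v = i} = μ i}

/-- A semistandard Young tableau of shape `lam`: positive entries on the diagram
(normalized to `0` off the diagram), weakly increasing along rows, strictly
increasing down columns. -/
def IsSSYT {N : ℕ} (lam : Nat.Partition N) (t : Cell → ℕ) : Prop :=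
  (∀ c, c ∉ diag lam → t c = 0) ∧ (∀ c ∈ diag lam, 0 < t c) ∧
  (∀ i j : ℕ, ((i, j + 1) : Cell) ∈ diag lam → t (i, j) ≤ t (i, j + 1)) ∧
  (∀ i j : ℕ, ((i + 1, j) : Cell) ∈ diag lam → t (i, j) < t (i + 1, j))

/-- The coefficient of the monomial `∏ i, x_i ^ μ i` in the Schur function `s_lam`,
i.e. the number of SSYT of shape `lam` and weight `μ`. -/
noncomputable def schurFn {N : ℕ} (lam : Nat.Partition N) (μ : ℕ → ℕ) : ℚ :=
  Nat.card {t : Cell → ℕ // IsSSYT lam t ∧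
    ∀ i, Nat.card {c : Cell // c ∈ diag lam ∧ t c = i} = μ i}

/-- The coefficient `[s_lam] f` of the Schur function `s_lam` in the (unique, when it
exists) expansion `f = ∑_{ν ⊢ N} c_ν s_ν` of a symmetric function `f`, homogeneous of
degree `N`, given by its monomial coefficients. -/
noncomputable def sCoeff {N : ℕ} (f : (ℕ → ℕ) → ℚ) (lam : Nat.Partition N) : ℚ :=
  if h : ∃ c : Nat.Partition N →₀ ℚ, ∀ μ, f μ = c.sum fun ν a => a * schurFn ν μ
  then h.choose lam else 0

/-! ### Graphs: generalized nets, generalized spiders, disjoint unions -/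

/-- The generalized net `GN_{n,m}`: the complete graph on the body `Fin n`, with a
pendant (`Sum.inr j`) attached to the anchor `Sum.inl j` for each `j : Fin m`. -/
def genNet (n m : ℕ) : SimpleGraph (Fin n ⊕ Fin m) :=
  SimpleGraph.fromRel fun a b =>
    match a, b with
    | Sum.inl _, Sum.inl _ => True
    | Sum.inl i, Sum.inr j => (i : ℕ) = (j : ℕ)
    | Sum.inr _, _ => False

/-- The generalized spider `GS_{n,(2,1^{m-1})}`: the complete graph on the body
`Fin n`, a pendant `Sum.inr (Sum.inl j)` attached to the body vertex `Sum.inl j` for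
each `j : Fin m`, and one extra vertex `Sum.inr (Sum.inr 0)` (the special pendant)
attached to the pendant `Sum.inr (Sum.inl 0)`, so that the body vertex `0` (the
special anchor) carries an attached path on two vertices. -/
def genSpider2 (n m : ℕ) : SimpleGraph (Fin n ⊕ (Fin m ⊕ Fin 1)) :=
  SimpleGraph.fromRel fun a b =>
    match a, b with
    | Sum.inl _, Sum.inl _ => True
    | Sum.inl i, Sum.inr (Sum.inl j) => (i : ℕ) = (j : ℕ)
    | Sum.inr (Sum.inl j), Sum.inr (Sum.inr _) => (j : ℕ) = 0
    | _, _ => False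

/-- Disjoint union of two simple graphs. -/
def disjUnion {α β : Type*} (G : SimpleGraph α) (H : SimpleGraph β) :
    SimpleGraph (α ⊕ β) :=
  SimpleGraph.fromRel fun a b =>
    match a, b with
    | Sum.inl a, Sum.inl b => G.Adj a b
    | Sum.inr a, Sum.inr b => H.Adj a b
    | _, _ => False

/-- The one-vertex graph `K_1`. -/
def K1 : SimpleGraph (Fin 1) := ⊥

/-- The path (= complete graph) on two vertices `P_2`. -/
def P2 : SimpleGraph (Fin 2) := ⊤

/-! ### Operations on partitions -/

/-- `removeOnes lam t` is the partition `lam ∖ 1^t` obtained by deleting `t` parts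
equal to `1` from `lam` (junk value if `lam` has fewer than `t` parts equal to `1`). -/
def removeOnes {N : ℕ} (lam : Nat.Partition N) (t : ℕ) : Nat.Partition (N - t) :=
  if h : Multiset.replicate t 1 ≤ lam.parts then
    { parts := lam.parts - Multiset.replicate t 1
      parts_pos := fun hx =>
        lam.parts_pos (Multiset.mem_of_le (tsub_le_self) hx)
      parts_sum := by
        have h1 : (lam.parts - Multiset.replicate t 1) + Multiset.replicate t 1
            = lam.parts := tsub_add_cancel_of_le h
        have h2 := congrArg Multiset.sum h1
        rw [Multiset.sum_add, Multiset.sum_replicate, lam.parts_sum] at h2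
        simp only [smul_eq_mul, mul_one] at h2
        omega }
  else Nat.Partition.indiscrete (N - t)

/-- The partition `(2^a, 1^b)` of `2*a + b`. -/
def twoOne (a b : ℕ) : Nat.Partition (2 * a + b) where
  parts := Multiset.replicate a 2 + Multiset.replicate b 1
  parts_pos := by
    intro i hi
    rw [Multiset.mem_add] at hi
    rcases hi with hi | hi <;> · rw [Multiset.eq_of_mem_replicate hi]; omega
  parts_sum := by
    rw [Multiset.sum_add, Multiset.sum_replicate, Multiset.sum_replicate]
    simp only [smul_eq_mul, mul_one]
    omega

/-! ### Special rim hook `G`-tabloids -/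

/-- Two cells are adjacent if they share an edge. -/
def cellAdj (c d : Cell) : Prop :=
  (c.1 = d.1 ∧ (c.2 + 1 = d.2 ∨ d.2 + 1 = c.2)) ∨
  (c.2 = d.2 ∧ (c.1 + 1 = d.1 ∨ d.1 + 1 = c.1))

/-- A set of cells is (the diagram of) a Young diagram if it is closed under
decreasing either coordinate. -/
def IsYoungDiag (D : Set Cell) : Prop :=
  ∀ i j i' j' : ℕ, ((i, j) : Cell) ∈ D → i' ≤ i → j' ≤ j → ((i', j') : Cell) ∈ D

/-- A set of cells is connected (via edge-adjacency, within the set). -/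
def CellConnected (S : Set Cell) : Prop :=
  ∀ c ∈ S, ∀ d ∈ S, Relation.ReflTransGen (fun a b => a ∈ S ∧ b ∈ S ∧ cellAdj a b) c d

/-- A border strip (= rim hook, as a set of cells): nonempty, connected, and
containing no 2×2 square of cells. -/
def IsBorderStrip (H : Set Cell) : Prop :=
  H.Nonempty ∧ CellConnected H ∧
    ∀ i j : ℕ, ¬(((i, j) : Cell) ∈ H ∧ ((i + 1, j) : Cell) ∈ H ∧
      ((i, j + 1) : Cell) ∈ H ∧ ((i + 1, j + 1) : Cell) ∈ H)

/-- `H` is a rim hook of the Young diagram `D`: a border strip contained in `D`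
whose removal leaves a Young diagram. -/
def IsRimHookOf (D H : Set Cell) : Prop :=
  H ⊆ D ∧ IsBorderStrip H ∧ IsYoungDiag (D \ H)

/-- `IsRemovalSeq L D` says that the sets of cells in the list `L` may be removed
successively from the diagram `D`, each being a rim hook of what remains, with
nothing left at the end. -/
def IsRemovalSeq : List (Set Cell) → Set Cell → Prop
  | [], D => D = ∅
  | H :: L, D => IsRimHookOf D H ∧ IsRemovalSeq L (D \ H)

/-- A special rim hook `G`-tabloid of shape `lam`, with respect to an order `r` on
the vertices of `G`: the cells of the diagram of `lam` are filled bijectively with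
the vertices of `G` (vertex `v` goes in cell `pos v`), and the diagram is tiled by
rim hooks, successively removable, each meeting the first column.  The rim hooks are
recorded by the labelling `hk`, which assigns to each vertex the topmost row in which
its rim hook meets the first column.  The vertices in each rim hook form a stable set
of `G` and, read from the rim hook's (bottom) cell in the first column — i.e. in
increasing order of the diagonal index `column − row` — they increase with respect
to `r`. -/
structure SRHGTabloid {V : Type*} (G : SimpleGraph V) (r : V → V → Prop)
    {N : ℕ} (lam : Nat.Partition N) where
  /-- the cell occupied by each vertex -/
  pos : V → Cell
  /-- the label of the rim hook containing each vertex: the topmost row in which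
  that rim hook meets the first column -/
  hk : V → ℕ
  pos_inj : Function.Injective pos
  pos_range : Set.range pos = diag lam
  hk_mem : ∀ v, ((hk v, 0) : Cell) ∈ pos '' {u | hk u = hk v}
  hk_min : ∀ v i, ((i, 0) : Cell) ∈ pos '' {u | hk u = hk v} → hk v ≤ i
  removal : ∃ L : List ℕ, L.Nodup ∧ (∀ i, i ∈ L ↔ ∃ v, hk v = i) ∧
    IsRemovalSeq (L.map fun i => pos '' {u | hk u = i}) (diag lam)
  stable : ∀ u v, hk u = hk v → u ≠ v → ¬G.Adj u v
  increasing : ∀ u v, hk u = hk v →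
    ((pos u).2 : ℤ) - ((pos u).1 : ℤ) < ((pos v).2 : ℤ) - ((pos v).1 : ℤ) → r u v

/-- The sign of a special rim hook `G`-tabloid: `(-1)` to the total number of north
steps, where a rim hook spanning `k` rows contributes `k - 1` north steps. -/
noncomputable def tabSign {V : Type*} {G : SimpleGraph V} {r : V → V → Prop}
    {N : ℕ} {lam : Nat.Partition N} (T : SRHGTabloid G r lam) : ℤ :=
  (-1) ^ ∑ i ∈ Finset.range N,
    ({a : ℕ | ∃ v, T.hk v = i ∧ (T.pos v).1 = a}.ncard - 1)

/-- The cells of the head of a tabloid of shape `lam`: the rows of length `≥ 2`. -/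
def headCells {N : ℕ} (lam : Nat.Partition N) : Set Cell :=
  {c : Cell | c ∈ diag lam ∧ 2 ≤ rowLen lam c.1}

/-- The cells of the tail of a tabloid of shape `lam`: the rows of length `1`. -/
def tailCells {N : ℕ} (lam : Nat.Partition N) : Set Cell :=
  {c : Cell | c ∈ diag lam ∧ rowLen lam c.1 = 1}

/-- Two special rim hook `G`-tabloids have the same head: the same cells of the head
are occupied by the same vertices, and the rim hook structure restricted to the head
agrees. -/
def SameHead {V : Type*} {G : SimpleGraph V} {r : V → V → Prop} {N : ℕ}
    {lam : Nat.Partition N} (T T' : SRHGTabloid G r lam) : Prop :=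
  (∀ v, T.pos v ∈ headCells lam ↔ T'.pos v ∈ headCells lam) ∧
  (∀ v, T.pos v ∈ headCells lam → T.pos v = T'.pos v) ∧
  (∀ u v, T.pos u ∈ headCells lam → T.pos v ∈ headCells lam →
    (T.hk u = T.hk v ↔ T'.hk u = T'.hk v))

namespace GNet

section

open Finset


/-- Partition sequences of size `N`. -/
def IsP (N : ℕ) (ν : ℕ → ℕ) : Prop :=
  Antitone ν ∧ ν N = 0 ∧ ∑ i ∈ range N, ν i = N

lemma sum_ext_zero {ν : ℕ → ℕ} {A B : ℕ} (hAB : A ≤ B) (h : ∀ i, A ≤ i → ν i = 0) :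
    ∑ i ∈ range B, ν i = ∑ i ∈ range A, ν i := by
  symm
  apply Finset.sum_subset (by intro x; simp; omega)
  intro x _ hx
  simp at hx
  exact h x hx

lemma anti_zero {ν : ℕ → ℕ} (ha : Antitone ν) {B : ℕ} (h : ν B = 0) {i : ℕ} (hi : B ≤ i) :
    ν i = 0 := by
  have := ha hi
  omega

lemma IsP.zero {N : ℕ} {ν : ℕ → ℕ} (h : IsP N ν) {i : ℕ} (hi : N ≤ i) : ν i = 0 :=
  anti_zero h.1 h.2.1 hi

lemma IsP.sum {N : ℕ} {ν : ℕ → ℕ} (h : IsP N ν) {B : ℕ} (hB : ∀ i, B ≤ i → ν i = 0) :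
    ∑ i ∈ range B, ν i = N := by
  rcases le_total N B with hh | hh
  · rw [sum_ext_zero hh (fun i hi => h.zero hi)]; exact h.2.2
  · rw [← sum_ext_zero hh hB]; exact h.2.2

lemma IsP.sum' {N : ℕ} {ν : ℕ → ℕ} (h : IsP N ν) {B : ℕ} (hB : N ≤ B) :
    ∑ i ∈ range B, ν i = N := h.sum (fun _ hi => h.zero (hB.trans hi))

lemma IsP.mk' {N B : ℕ} {ν : ℕ → ℕ} (ha : Antitone ν) (hB : ν B = 0)
    (hs : ∑ i ∈ range B, ν i = N) : IsP N ν := by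
  have key : ν N = 0 := by
    by_contra hne
    have hNB : N < B := by
      by_contra hh
      exact hne (anti_zero ha hB (by omega))
    have h1 : ∑ i ∈ range (N + 1), ν i ≤ ∑ i ∈ range B, ν i :=
      Finset.sum_le_sum_of_subset (by intro x; simp; omega)
    have h2 : ∑ i ∈ range (N + 1), 1 ≤ ∑ i ∈ range (N + 1), ν i := by
      apply Finset.sum_le_sum
      intro i hi
      simp at hi
      have := ha (show i ≤ N by omega)
      omega
    simp at h2
    omega
  refine ⟨ha, key, ?_⟩
  rcases le_total N B with hh | hh
  · rw [← sum_ext_zero hh (fun i hi => anti_zero ha key hi)]; exact hs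
  · rw [sum_ext_zero hh (fun i hi => anti_zero ha hB hi)]; exact hs

lemma IsP.le {N : ℕ} {ν : ℕ → ℕ} (h : IsP N ν) (i : ℕ) : ν i ≤ N := by
  by_cases hi : i < N
  · rw [← h.2.2]
    exact Finset.single_le_sum (f := ν) (fun _ _ => Nat.zero_le _) (by simpa using hi)
  · rw [h.zero (by omega)]; omega

lemma IsP.inj {N M : ℕ} {ν : ℕ → ℕ} (h : IsP N ν) (h' : IsP M ν) : N = M := by
  exact (h.sum' (le_max_left N M)).symm.trans (h'.sum' (le_max_right N M))

lemma finite_IsP (N : ℕ) : {ν | IsP N ν}.Finite := by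
  apply Set.Finite.subset (Set.finite_range
    (fun g : Fin N → Fin (N + 1) => fun i => if h : i < N then ((g ⟨i, h⟩ : Fin (N+1)) : ℕ) else 0))
  intro ν hν
  refine ⟨fun i => ⟨ν i, by have := IsP.le hν i; omega⟩, ?_⟩
  funext i
  by_cases hi : i < N
  · simp [hi]
  · simp [hi, IsP.zero hν (show N ≤ i by omega)]

/-- The finite set of partition sequences of size `N`. -/
noncomputable def PF (N : ℕ) : Finset (ℕ → ℕ) := (finite_IsP N).toFinset

lemma mem_PF {N : ℕ} {ν : ℕ → ℕ} : ν ∈ PF N ↔ IsP N ν := by simp [PF]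

/-- `κ / ν` is a horizontal strip. -/
def HS (κ ν : ℕ → ℕ) : Prop := ∀ i, ν i ≤ κ i ∧ κ (i + 1) ≤ ν i

/-- `ρ / ν` is a vertical strip. -/
def VS (ρ ν : ℕ → ℕ) : Prop := ∀ i, ν i ≤ ρ i ∧ ρ i ≤ ν i + 1

lemma HS.anti {κ ν : ℕ → ℕ} (h : HS κ ν) : Antitone ν :=
  antitone_nat_of_succ_le fun i => ((h (i + 1)).1).trans (h i).2

lemma sub_IsP {K : ℕ} {κ ρ : ℕ → ℕ} (hκ : IsP K κ) (ha : Antitone ρ) (hle : ∀ i, ρ i ≤ κ i) :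
    IsP (∑ i ∈ range K, ρ i) ρ ∧ ∑ i ∈ range K, ρ i ≤ K := by
  constructor
  · refine IsP.mk' (B := K) ha ?_ rfl
    have := hle K; rw [hκ.2.1] at this; omega
  · calc _ ≤ ∑ i ∈ range K, κ i := Finset.sum_le_sum (fun i _ => hle i)
      _ = K := hκ.2.2

lemma le_size {K M : ℕ} {κ ρ : ℕ → ℕ} (hκ : IsP K κ) (hρ : IsP M ρ) (hle : ∀ i, ρ i ≤ κ i) :
    M ≤ K := by
  have h := sub_IsP hκ hρ.1 hle
  rw [hρ.inj h.1]; exact h.2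

lemma eq_of_le_size {K : ℕ} {κ ρ : ℕ → ℕ} (hκ : IsP K κ) (hρ : IsP K ρ)
    (hle : ∀ i, ρ i ≤ κ i) : ρ = κ := by
  have h := (Finset.sum_eq_sum_iff_of_le (s := range K) (fun i _ => hle i)).1
    (by rw [hκ.2.2, hρ.2.2])
  funext i
  by_cases hi : i < K
  · exact h i (by simpa using hi)
  · rw [hκ.zero (by omega), hρ.zero (by omega)]

/-! ### Sign-reversing cancellation -/

lemma vh_cancel {N k K : ℕ} {κ ν : ℕ → ℕ} (hν : IsP (N - k) ν) (hk : k ≤ N)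
    (hκ : IsP K κ) (hK : K ≤ N) :
    ∑ r ∈ range (N + 1), ∑ ρ ∈ PF (N - r), (if VS ρ ν ∧ HS κ ρ then (-1 : ℚ) ^ r else 0)
      = if κ = ν then (-1 : ℚ) ^ k else 0 := by
  rw [Finset.sum_sigma']
  by_cases hne : κ = ν
  · subst hne
    rw [if_pos rfl]
    rw [Finset.sum_eq_single (⟨k, κ⟩ : (_ : ℕ) × (ℕ → ℕ))]
    · have h1 : VS κ κ := fun i => ⟨le_rfl, by omega⟩
      have h2 : HS κ κ := fun i => ⟨le_rfl, hκ.1 (by omega)⟩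
      simp [h1, h2]
    · rintro ⟨r, ρ⟩ hm hn
      simp only [Finset.mem_sigma, Finset.mem_range, mem_PF] at hm
      rw [if_neg]
      rintro ⟨hv, hh⟩
      have : ρ = κ := funext fun i => le_antisymm (hh i).1 (hv i).1
      subst this
      have := hν.inj hm.2
      apply hn
      have : r = k := by omega
      subst this; rfl
    · intro hm
      exfalso; apply hm
      simp only [Finset.mem_sigma, Finset.mem_range, mem_PF]
      exact ⟨by omega, hν⟩
  · rw [if_neg hne]
    by_cases hle : ∀ i, ν i ≤ κ i
    swap
    · apply Finset.sum_eq_zero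
      rintro ⟨r, ρ⟩ hm
      rw [if_neg]
      rintro ⟨hv, hh⟩
      exact hle fun i => (hv i).1.trans (hh i).1
    -- last row where they differ
    have hex : ∃ i, ν i < κ i ∧ ∀ j, i < j → κ j = ν j := by
      have hS : ((range K).filter fun i => ν i < κ i).Nonempty := by
        by_contra hemp
        rw [Finset.not_nonempty_iff_eq_empty, Finset.filter_eq_empty_iff] at hemp
        apply hne
        funext i
        by_cases hi : i < K
        · have := hemp (by simpa using hi : i ∈ range K)
          have := hle i
          omega
        · have := hκ.zero (show K ≤ i by omega)
          have := hle i
          omega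
      refine ⟨_, (Finset.mem_filter.1 (Finset.max'_mem _ hS)).2, ?_⟩
      intro j hj
      by_contra hjn
      have hlt : ν j < κ j := lt_of_le_of_ne (hle j) (Ne.symm hjn)
      have hjK : j < K := by
        by_contra hjK
        have := hκ.zero (show K ≤ j by omega)
        omega
      have := Finset.le_max' ((range K).filter fun i => ν i < κ i) j (Finset.mem_filter.2 ⟨Finset.mem_range.2 hjK, hlt⟩)
      omega
    obtain ⟨i, hi, hlast⟩ := hex
    let tg : (ℕ → ℕ) → (ℕ → ℕ) := fun ρ => Function.update ρ i (2 * ν i + 1 - ρ i)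
    have htg : ∀ ρ, VS ρ ν → HS κ ρ → VS (tg ρ) ν ∧ HS κ (tg ρ) := by
      intro ρ hv hh
      constructor
      · intro j
        by_cases hj : j = i
        · subst hj; simp [tg]; have := hv j; omega
        · simp [tg, hj]; exact hv j
      · intro j
        by_cases hj : j = i
        · subst hj; simp [tg]
          have := hv j
          have h3 := hlast (j + 1) (by omega)
          have h4 := hν.1 (show j ≤ j + 1 by omega)
          omega
        · simp [tg, hj]; exact hh j
    have hiK : i < K := by
      by_contra hjK
      have := hκ.zero (show K ≤ i by omega)
      omega
    have hsum : ∀ ρ, VS ρ ν → ∃ e : ℕ, (∑ j ∈ range K, tg ρ j) + 1 = (∑ j ∈ range K, ρ j) + 2 * e ∧ e ≤ 1 := by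
      intro ρ hv
      have hmem : i ∈ range K := by simpa using hiK
      rw [Finset.sum_update_of_mem hmem, ← Finset.add_sum_erase _ _ hmem,
        Finset.sdiff_singleton_eq_erase]
      have := hv i
      refine ⟨ν i + 1 - ρ i, ?_, ?_⟩ <;> omega
    have hnew : ∀ r ρ, r ∈ range (N + 1) → ρ ∈ PF (N - r) → VS ρ ν → HS κ ρ →
        N - (∑ j ∈ range K, tg ρ j) ∈ range (N + 1) ∧
        IsP (N - (N - (∑ j ∈ range K, tg ρ j))) (tg ρ) ∧
        (-1 : ℚ) ^ (N - (∑ j ∈ range K, tg ρ j)) = - (-1) ^ r ∧ N - r = ∑ j ∈ range K, ρ j := by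
      intro r ρ hr hρ hv hh
      have h1 := htg ρ hv hh
      have h2 := sub_IsP hκ h1.2.anti (fun j => (h1.2 j).1)
      have h3 := sub_IsP hκ hh.anti (fun j => (hh j).1)
      have h4 := (mem_PF.1 hρ).inj h3.1
      simp at hr
      refine ⟨by simp, ?_, ?_, h4⟩
      · rw [Nat.sub_sub_self (by omega)]; exact h2.1
      · obtain ⟨e, he, he1⟩ := hsum ρ hv
        rcases Nat.le_one_iff_eq_zero_or_eq_one.1 he1 with rfl | rfl
        · have : N - (∑ j ∈ range K, tg ρ j) = r + 1 := by omega
          rw [this, pow_succ]; ring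
        · have : r = N - (∑ j ∈ range K, tg ρ j) + 1 := by omega
          rw [this, pow_succ]; ring_nf
    rw [← Finset.sum_filter]
    refine Finset.sum_involution
      (fun x _ => (⟨N - (∑ j ∈ range K, tg x.2 j), tg x.2⟩ : (_ : ℕ) × (ℕ → ℕ))) ?_ ?_ ?_ ?_
    · rintro ⟨r, ρ⟩ hm
      simp only [Finset.mem_filter, Finset.mem_sigma] at hm
      have := hnew r ρ hm.1.1 hm.1.2 hm.2.1 hm.2.2
      simp only
      rw [this.2.2.1]; ring
    · rintro ⟨r, ρ⟩ hm _ heq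
      simp only [Finset.mem_filter, Finset.mem_sigma] at hm
      have h1 := hm.2.1 i
      have h2 : tg ρ = ρ := by
        have := congrArg Sigma.snd heq
        simpa using this
      have h3 := congrFun h2 i
      simp [tg] at h3
      omega
    · rintro ⟨r, ρ⟩ hm
      simp only [Finset.mem_filter, Finset.mem_sigma] at hm ⊢
      have h := hnew r ρ hm.1.1 hm.1.2 hm.2.1 hm.2.2
      exact ⟨⟨h.1, mem_PF.2 h.2.1⟩, htg ρ hm.2.1 hm.2.2⟩
    · rintro ⟨r, ρ⟩ hm
      simp only [Finset.mem_filter, Finset.mem_sigma] at hm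
      have h := hnew r ρ hm.1.1 hm.1.2 hm.2.1 hm.2.2
      have h2 : tg (tg ρ) = ρ := by
        funext j
        by_cases hj : j = i
        · subst hj; simp [tg]; have := hm.2.1 j; omega
        · simp [tg, hj]
      simp only [h2]
      rw [← h.2.2.2]
      have hr := hm.1.1
      simp only [Finset.mem_range] at hr
      congr 1
      omega

end

end GNet

namespace GNet

section

open Finset


/-- Number of nonzero rows. -/
noncomputable def len (σ : ℕ → ℕ) : ℕ := sInf {i | σ i = 0}

/-- Append a part equal to `1`. -/
noncomputable def app (σ : ℕ → ℕ) : ℕ → ℕ := Function.update σ (len σ) 1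

lemma IsP.len_zero {N : ℕ} {σ : ℕ → ℕ} (h : IsP N σ) : σ (len σ) = 0 :=
  Nat.sInf_mem (s := {i | σ i = 0}) ⟨N, h.2.1⟩

lemma lt_len {σ : ℕ → ℕ} {i : ℕ} (h : i < len σ) : σ i ≠ 0 := fun h0 =>
  Nat.notMem_of_lt_sInf h (show i ∈ {i | σ i = 0} from h0)

lemma len_le {σ : ℕ → ℕ} {i : ℕ} (h : σ i = 0) : len σ ≤ i :=
  Nat.sInf_le (show i ∈ {i | σ i = 0} from h)

lemma IsP.ge_len {N : ℕ} {σ : ℕ → ℕ} (h : IsP N σ) {i : ℕ} (hi : len σ ≤ i) : σ i = 0 :=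
  anti_zero h.1 h.len_zero hi

lemma len_eq {σ : ℕ → ℕ} {L : ℕ} (h0 : σ L = 0) (h1 : ∀ i, i < L → σ i ≠ 0) : len σ = L := by
  apply le_antisymm (len_le h0)
  by_contra hlt
  exact h1 (len σ) (by omega) (Nat.sInf_mem (s := {i | σ i = 0}) ⟨L, h0⟩)

lemma IsP.app {N : ℕ} {σ : ℕ → ℕ} (h : IsP N σ) : IsP (N + 1) (app σ) := by
  refine IsP.mk' (B := len σ + 1) ?_ ?_ ?_
  · apply antitone_nat_of_succ_le
    intro i
    unfold GNet.app
    rcases lt_trichotomy (i + 1) (len σ) with hi | hi | hi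
    · rw [Function.update_of_ne (by omega), Function.update_of_ne (by omega)]
      exact h.1 (by omega)
    · rw [hi, Function.update_self, Function.update_of_ne (by omega)]
      have := lt_len (show i < len σ by omega)
      omega
    · rw [Function.update_of_ne (by omega), h.ge_len (by omega)]
      omega
  · unfold GNet.app
    rw [Function.update_of_ne (by omega), h.ge_len (by omega)]
  · unfold GNet.app
    rw [Finset.sum_range_succ, Function.update_self]
    congr 1
    rw [← h.sum (B := len σ) (fun i hi => h.ge_len hi)]
    apply Finset.sum_congr rfl
    intro i hi
    simp at hi
    rw [Function.update_of_ne (by omega)]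

lemma IsP.len_app {N : ℕ} {σ : ℕ → ℕ} (h : IsP N σ) : len (GNet.app σ) = len σ + 1 := by
  apply len_eq
  · unfold GNet.app
    rw [Function.update_of_ne (by omega), h.ge_len (by omega)]
  · intro i hi
    unfold GNet.app
    by_cases hi' : i = len σ
    · rw [hi', Function.update_self]; omega
    · rw [Function.update_of_ne hi']; exact lt_len (by omega)

lemma IsP.app_inj {N M : ℕ} {σ τ : ℕ → ℕ} (h : IsP N σ) (h' : IsP M τ)
    (he : GNet.app σ = GNet.app τ) : σ = τ := by
  have hl : len σ = len τ := by
    have := congrArg len he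
    rw [h.len_app, h'.len_app] at this
    omega
  funext i
  by_cases hi : i = len σ
  · rw [hi, h.len_zero, hl, h'.len_zero]
  · have := congrFun he i
    unfold GNet.app at this
    rwa [Function.update_of_ne hi, Function.update_of_ne (by omega)] at this

/-- removing a trailing one -/
lemma exists_app {N : ℕ} {ρ : ℕ → ℕ} {i : ℕ} (h : IsP N ρ) (hi : ρ i = 1) (hi' : ρ (i + 1) = 0) :
    ∃ σ, IsP (N - 1) σ ∧ GNet.app σ = ρ ∧ len σ = i ∧ 1 ≤ N ∧ σ = Function.update ρ i 0 := by
  have hl : len (Function.update ρ i 0) = i := by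
    apply len_eq
    · simp
    · intro j hj
      rw [Function.update_of_ne (by omega)]
      have := h.1 hj.le
      omega
  have hN : 1 ≤ N := by have := h.le i; omega
  refine ⟨Function.update ρ i 0, ?_, ?_, hl, hN, rfl⟩
  · refine IsP.mk' (B := i + 1) ?_ ?_ ?_
    · apply antitone_nat_of_succ_le
      intro j
      by_cases hj : j = i
      · subst hj; simp [hi']
      · by_cases hj2 : j + 1 = i
        · subst hj2; simp
        · rw [Function.update_of_ne hj2, Function.update_of_ne hj]; exact h.1 (by omega)
    · simp [hi']
    · have := h.sum (B := i + 1) (fun j hj => anti_zero h.1 hi' hj)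
      rw [Finset.sum_range_succ] at this ⊢
      rw [Function.update_self]
      have h2 : ∑ x ∈ range i, Function.update ρ i 0 x = ∑ x ∈ range i, ρ x := by
        apply Finset.sum_congr rfl
        intro j hj
        simp at hj
        rw [Function.update_of_ne (by omega)]
      omega
  · unfold GNet.app
    rw [hl]
    funext j
    by_cases hj : j = i
    · subst hj; simp [hi]
    · simp [hj]

/-- number of boxes of a vertical strip is bounded by the number of rows. -/
lemma VS.size_le {N M B : ℕ} {ρ ν : ℕ → ℕ} (hρ : IsP N ρ) (hν : IsP M ν) (hv : VS ρ ν)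
    (hB : ρ B = 0) : N ≤ M + B := by
  have h1 := hρ.sum (B := B) (fun j hj => anti_zero hρ.1 hB hj)
  have h2 := hν.sum (B := B) (fun j hj => by
    have := (hv j).1; rw [anti_zero hρ.1 hB hj] at this; omega)
  have : ∑ i ∈ range B, ρ i ≤ ∑ i ∈ range B, (ν i + 1) :=
    Finset.sum_le_sum fun i _ => (hv i).2
  rw [Finset.sum_add_distrib, h1, h2] at this
  simpa using this

lemma VS.full {N M B : ℕ} {ρ ν : ℕ → ℕ} (hρ : IsP N ρ) (hν : IsP M ν) (hv : VS ρ ν)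
    (hB : ρ B = 0) (hN : N = M + B) : ∀ i, i < B → ρ i = ν i + 1 := by
  have h1 := hρ.sum (B := B) (fun j hj => anti_zero hρ.1 hB hj)
  have h2 := hν.sum (B := B) (fun j hj => by
    have := (hv j).1; rw [anti_zero hρ.1 hB hj] at this; omega)
  have h3 : ∑ i ∈ range B, ρ i = ∑ i ∈ range B, (ν i + 1) := by
    rw [Finset.sum_add_distrib, h1, h2]; simpa using hN
  intro i hi
  exact (Finset.sum_eq_sum_iff_of_le (s := range B) (fun i _ => (hv i).2)).1 h3 i
    (by simpa using hi)

theorem abs_rec (N : ℕ) (hN : 2 ≤ N) (d : ℕ → (ℕ → ℕ) → ℚ) (C1 C2 : (ℕ → ℕ) → ℚ)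
    (hrel : ∀ r, 1 ≤ r → r ≤ N → ∀ ρ ∈ PF (N - r),
      ∑ j ∈ range (r + 1), (-1 : ℚ) ^ (r - j) *
          (∑ κ ∈ PF (N - j), if HS κ ρ then d j κ else 0)
        + (if r = 1 then C1 ρ else 0) + (if r = 2 then C2 ρ else 0) = 0)
    (hvan : ∀ k, 1 ≤ k → k ≤ N → ∀ ν ∈ PF (N - k), ν (k - 1) = 0 → d k ν = 0) :
    ∀ σ ∈ PF (N - 1), d 0 (app σ) = C1 σ + ∑ τ ∈ PF (N - 2), if app τ = σ then C2 τ else 0 := by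
  -- the relation with vertical strips
  have E1 : ∀ k, 1 ≤ k → k ≤ N → ∀ ν ∈ PF (N - k),
      (∑ ρ ∈ PF N, if VS ρ ν then d 0 ρ else 0) =
        (∑ ρ ∈ PF (N - 1), if VS ρ ν then C1 ρ else 0) +
        (∑ ρ ∈ PF (N - 2), if VS ρ ν then C2 ρ else 0) + d k ν := by
    intro k hk1 hkN ν hν
    have hνP := mem_PF.1 hν
    let R : ℕ → (ℕ → ℕ) → ℚ := fun r ρ => ∑ j ∈ range (N + 1), (-1 : ℚ) ^ (r + j) *
          (∑ κ ∈ PF (N - j), if HS κ ρ then d j κ else 0)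
    have hR : ∀ r, r ≤ N → ∀ ρ ∈ PF (N - r), R r ρ = ∑ j ∈ range (r + 1), (-1 : ℚ) ^ (r - j) *
          (∑ κ ∈ PF (N - j), if HS κ ρ then d j κ else 0) := by
      intro r hr ρ hρ
      symm
      trans (∑ j ∈ range (r + 1), (-1 : ℚ) ^ (r + j) *
          (∑ κ ∈ PF (N - j), if HS κ ρ then d j κ else 0))
      · apply Finset.sum_congr rfl
        intro j hj
        simp at hj
        have : (-1 : ℚ) ^ (r + j) = (-1 : ℚ) ^ (r - j) := by
          have : r + j = (r - j) + 2 * j := by omega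
          rw [this, pow_add, pow_mul]; simp
        rw [this]
      · apply Finset.sum_subset (by intro x; simp; omega)
        intro j hj1 hj2
        simp at hj1 hj2
        rw [Finset.sum_eq_zero, mul_zero]
        intro κ hκ
        rw [if_neg]
        intro hh
        have := le_size (mem_PF.1 hκ) (mem_PF.1 hρ) (fun i => (hh i).1)
        omega
    have tot : ∑ r ∈ range (N + 1), ∑ ρ ∈ PF (N - r), (if VS ρ ν then R r ρ else 0) = d k ν := by
      calc _ = ∑ j ∈ range (N + 1), ∑ κ ∈ PF (N - j), (-1 : ℚ) ^ j * d j κ *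
              ∑ r ∈ range (N + 1), ∑ ρ ∈ PF (N - r),
                (if VS ρ ν ∧ HS κ ρ then (-1 : ℚ) ^ r else 0) := by
            have : ∀ r ρ, (if VS ρ ν then R r ρ else 0) =
                ∑ j ∈ range (N + 1), ∑ κ ∈ PF (N - j), (-1 : ℚ) ^ j * d j κ *
                  (if VS ρ ν ∧ HS κ ρ then (-1 : ℚ) ^ r else 0) := by
              intro r ρ
              by_cases hv : VS ρ ν
              · simp only [hv, if_true, R, true_and]
                apply Finset.sum_congr rfl
                intro j _
                rw [Finset.mul_sum]
                apply Finset.sum_congr rfl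
                intro κ _
                split_ifs
                · rw [pow_add]; ring
                · ring
              · simp [hv]
            simp_rw [this, Finset.mul_sum]
            rw [Finset.sum_sigma']
            rw [Finset.sum_comm]
            apply Finset.sum_congr rfl
            intro j _
            rw [Finset.sum_comm]
            apply Finset.sum_congr rfl
            intro κ _
            rw [Finset.sum_sigma']
        _ = ∑ j ∈ range (N + 1), ∑ κ ∈ PF (N - j), (if κ = ν then d k ν else 0) := by
            apply Finset.sum_congr rfl
            intro j hj
            apply Finset.sum_congr rfl
            intro κ hκ
            simp at hj
            rw [vh_cancel hνP hkN (mem_PF.1 hκ) (by omega)]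
            split_ifs with he
            · subst he
              have := hνP.inj (mem_PF.1 hκ)
              have : j = k := by omega
              subst this
              rw [mul_right_comm, ← pow_add, ← two_mul, pow_mul]; simp
            · simp
        _ = d k ν := by
            rw [Finset.sum_eq_single k]
            · rw [Finset.sum_ite_eq' (PF (N - k)) ν, if_pos hν]
            · intro j hj hjk
              simp at hj
              apply Finset.sum_eq_zero
              intro κ hκ
              rw [if_neg]
              rintro rfl
              have := hνP.inj (mem_PF.1 hκ)
              omega
            · intro h; simp at h; omega
    have hR0 : ∀ ρ ∈ PF N, R 0 ρ = d 0 ρ := by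
      intro ρ hρ
      rw [hR 0 (by omega) ρ (by simpa using hρ)]
      simp
      rw [Finset.sum_eq_single ρ]
      · rw [if_pos]
        intro i
        exact ⟨le_rfl, (mem_PF.1 hρ).1 (by omega)⟩
      · intro κ hκ hne
        rw [if_neg]
        intro hh
        exact hne (eq_of_le_size (mem_PF.1 hκ) (mem_PF.1 hρ) (fun i => (hh i).1)).symm
      · intro h; exact absurd hρ h
    have hRr : ∀ r, 1 ≤ r → r ≤ N → ∀ ρ ∈ PF (N - r), R r ρ =
        - (if r = 1 then C1 ρ else 0) - (if r = 2 then C2 ρ else 0) := by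
      intro r h1 h2 ρ hρ
      rw [hR r h2 ρ hρ]
      have := hrel r h1 h2 ρ hρ
      linarith
    rw [← tot]
    have hNe : N + 1 = (N - 2) + 1 + 1 + 1 := by omega
    rw [hNe, Finset.sum_range_succ', Finset.sum_range_succ', Finset.sum_range_succ']
    have z : ∑ r ∈ range (N - 2), ∑ ρ ∈ PF (N - (r + 1 + 1 + 1)),
        (if VS ρ ν then R (r + 1 + 1 + 1) ρ else 0) = 0 := by
      apply Finset.sum_eq_zero
      intro r hr
      simp at hr
      apply Finset.sum_eq_zero
      intro ρ hρ
      rw [hRr _ (by omega) (by omega) ρ hρ]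
      simp
    rw [z]
    have z0 : ∑ ρ ∈ PF (N - 0), (if VS ρ ν then R 0 ρ else 0) =
        ∑ ρ ∈ PF N, if VS ρ ν then d 0 ρ else 0 := by
      apply Finset.sum_congr rfl
      intro ρ hρ
      rw [hR0 ρ hρ]
    have z1 : ∑ ρ ∈ PF (N - (0 + 1)), (if VS ρ ν then R (0 + 1) ρ else 0) =
        - ∑ ρ ∈ PF (N - 1), if VS ρ ν then C1 ρ else 0 := by
      rw [← Finset.sum_neg_distrib]
      apply Finset.sum_congr rfl
      intro ρ hρ
      rw [hRr _ (by omega) (by omega) ρ hρ]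
      by_cases hv : VS ρ ν <;> simp [hv]
    have z2 : ∑ ρ ∈ PF (N - (0 + 1 + 1)), (if VS ρ ν then R (0 + 1 + 1) ρ else 0) =
        - ∑ ρ ∈ PF (N - 2), if VS ρ ν then C2 ρ else 0 := by
      rw [← Finset.sum_neg_distrib]
      apply Finset.sum_congr rfl
      intro ρ hρ
      rw [hRr _ (by omega) (by omega) ρ hρ]
      by_cases hv : VS ρ ν <;> simp [hv]
    rw [z0, z1, z2]
    ring
  -- reformulate via `app`
  let g : (ℕ → ℕ) → ℚ := fun σ =>
    d 0 (app σ) - (C1 σ + ∑ τ ∈ PF (N - 2), if app τ = σ then C2 τ else 0)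
  have E2 : ∀ k, 1 ≤ k → k ≤ N → ∀ ν ∈ PF (N - k), ν (k - 1) = 0 →
      ∑ σ ∈ PF (N - 1) with VS σ ν, g σ = 0 := by
    intro k hk1 hkN ν hν hνk
    have hνP := mem_PF.1 hν
    have h := E1 k hk1 hkN ν hν
    rw [hvan k hk1 hkN ν hν hνk] at h
    have a1 : (∑ ρ ∈ PF N, if VS ρ ν then d 0 ρ else 0) =
        ∑ σ ∈ PF (N - 1) with VS σ ν, d 0 (app σ) := by
      rw [← Finset.sum_filter]
      symm
      apply Finset.sum_bij (fun σ _ => app σ)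
      · intro σ hσ
        simp only [Finset.mem_filter, mem_PF] at hσ ⊢
        have := hσ.1.app
        rw [show N - 1 + 1 = N by omega] at this
        refine ⟨this, ?_⟩
        intro i
        by_cases hi : i = len σ
        · subst hi
          have := hσ.2 (len σ)
          rw [hσ.1.len_zero] at this
          simp [app]; omega
        · simp [app, hi]; exact hσ.2 i
      · intro σ hσ τ hτ he
        simp only [Finset.mem_filter, mem_PF] at hσ hτ
        exact hσ.1.app_inj hτ.1 he
      · intro ρ hρ
        simp only [Finset.mem_filter, mem_PF] at hρ
        have hk : ρ (k - 1) ≠ 0 := by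
          intro h0
          have := VS.size_le hρ.1 hνP hρ.2 h0
          omega
        have hl : k - 1 < len ρ := by
          by_contra hcon
          exact hk (hρ.1.ge_len (by omega))
        have h1 : ρ (len ρ - 1) ≠ 0 := lt_len (by omega)
        have h2 : ν (len ρ - 1) = 0 := anti_zero hνP.1 hνk (by omega)
        have h3 := (hρ.2 (len ρ - 1)).2
        obtain ⟨σ, hσ, hap, hlen, _, hup⟩ := exists_app (i := len ρ - 1) hρ.1 (by omega)
          (by rw [show len ρ - 1 + 1 = len ρ by omega]; exact hρ.1.len_zero)
        refine ⟨σ, ?_, hap⟩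
        simp only [Finset.mem_filter, mem_PF]
        refine ⟨hσ, ?_⟩
        intro i
        rw [hup]
        by_cases hi : i = len ρ - 1
        · subst hi; simp [h2]
        · simp [hi]; exact hρ.2 i
      · intro σ _; rfl
    have a2 : (∑ ρ ∈ PF (N - 2), if VS ρ ν then C2 ρ else 0) =
        ∑ σ ∈ PF (N - 1) with VS σ ν, ∑ τ ∈ PF (N - 2), if app τ = σ then C2 τ else 0 := by
      rw [Finset.sum_comm]
      apply Finset.sum_congr rfl
      intro τ hτ
      have hτP := mem_PF.1 hτ
      rw [Finset.sum_ite_eq]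
      have hap := hτP.app
      rw [show N - 2 + 1 = N - 1 by omega] at hap
      have : (app τ ∈ (PF (N - 1)).filter fun σ => VS σ ν) ↔ VS τ ν := by
        simp only [Finset.mem_filter, mem_PF, hap, true_and]
        constructor
        · intro hv i
          by_cases hi : i = len τ
          · have h5 := hv i
            have h6 : app τ i = 1 := by rw [hi]; simp [app]
            rw [h6] at h5
            by_cases hz : ν i = 0
            · rw [hz, hi, hτP.len_zero]; omega
            · exfalso
              have hik : i < k - 1 := by
                by_contra hc
                exact hz (anti_zero hνP.1 hνk (by omega))
              have hz1 : app τ (len τ + 1) = 0 := by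
                rw [← hτP.len_app]; exact hap.len_zero
              have := VS.size_le hap hνP hv hz1
              have hf := VS.full hap hνP hv hz1 (by omega) i (by omega)
              omega
          · have := hv i
            simp only [app, Function.update_of_ne hi] at this
            exact this
        · intro hv i
          by_cases hi : i = len τ
          · subst hi
            have := hv (len τ)
            rw [hτP.len_zero] at this
            simp [app]; omega
          · simp [app, hi]; exact hv i
      simp only [this]
    rw [a1, a2, ← Finset.sum_filter] at h
    simp only [g, Finset.sum_sub_distrib, Finset.sum_add_distrib]
    linarith
  have main : ∀ D : ℕ, ∀ σ ∈ PF (N - 1), N ≤ len σ + D → g σ = 0 := by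
    intro D
    induction D with
    | zero =>
      intro σ hσ h
      have := len_le (mem_PF.1 hσ).2.1
      omega
    | succ D ih =>
      intro σ hσ hD
      have hσP := mem_PF.1 hσ
      have hlen := len_le hσP.2.1
      let ν : ℕ → ℕ := fun i => σ i - 1
      have hνP : IsP (N - (len σ + 1)) ν := by
        refine IsP.mk' (B := len σ) ?_ ?_ ?_
        · intro a b hab
          have := hσP.1 hab
          simp only [ν]; omega
        · simp [ν, hσP.len_zero]
        · have h1 := hσP.sum (B := len σ) (fun i hi => hσP.ge_len hi)
          have h2 : ∑ i ∈ range (len σ), (ν i + 1) = ∑ i ∈ range (len σ), σ i := by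
            apply Finset.sum_congr rfl
            intro i hi
            simp at hi
            have := lt_len hi
            simp only [ν]; omega
          rw [Finset.sum_add_distrib] at h2
          simp at h2
          omega
      have hv : VS σ ν := by
        intro i
        simp only [ν]; omega
      have h := E2 (len σ + 1) (by omega) (by omega) ν (mem_PF.2 hνP)
        (by simp [ν, hσP.len_zero])
      rw [Finset.sum_eq_single σ] at h
      · exact h
      · intro τ hτ hne
        simp only [Finset.mem_filter, mem_PF] at hτ
        apply ih τ (mem_PF.2 hτ.1)
        by_contra hc
        have hz : τ (len σ) = 0 := hτ.1.ge_len (by omega)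
        have hf := VS.full hτ.1 hνP hτ.2 hz (by omega)
        apply hne
        funext i
        by_cases hi : i < len σ
        · rw [hf i hi]
          have := lt_len hi
          simp only [ν]; omega
        · rw [hσP.ge_len (by omega), anti_zero hτ.1.1 hz (by omega)]
      · intro hn
        exact absurd (Finset.mem_filter.2 ⟨hσ, hv⟩) hn
  intro σ hσ
  have := main N σ hσ (by omega)
  simp only [g] at this
  linarith

end

end GNet

namespace GNet

section

open Finset


/-- Kostka numbers for a list of multiplicities (head = largest entry). -/
noncomputable def K : List ℕ → (ℕ → ℕ) → ℚ
  | [], κ => if κ = 0 then 1 else 0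
  | a :: l, κ => if IsP (a + l.sum) κ then
      ∑ ν ∈ PF l.sum, if HS κ ν then K l ν else 0 else 0

lemma IsP_zero {κ : ℕ → ℕ} : IsP 0 κ ↔ κ = 0 := by
  constructor
  · intro h; funext i; exact h.zero (Nat.zero_le _)
  · rintro rfl; exact ⟨fun _ _ _ => le_rfl, rfl, by simp⟩

lemma K_ne_IsP {l : List ℕ} {κ : ℕ → ℕ} (h : K l κ ≠ 0) : IsP l.sum κ := by
  cases l with
  | nil =>
    simp only [K] at h
    rw [List.sum_nil, IsP_zero]
    by_contra h'
    simp [h'] at h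
  | cons a l =>
    simp only [K] at h
    by_contra h'
    rw [List.sum_cons] at h'
    simp [h'] at h

lemma K_eq_zero {l : List ℕ} {κ : ℕ → ℕ} {N : ℕ} (h : IsP N κ) (hN : l.sum ≠ N) : K l κ = 0 := by
  by_contra h'
  exact hN ((K_ne_IsP h').inj h)

lemma K_cons {a : ℕ} {l : List ℕ} {κ : ℕ → ℕ} (h : IsP (a + l.sum) κ) :
    K (a :: l) κ = ∑ ν ∈ PF l.sum, if HS κ ν then K l ν else 0 := by
  simp only [K, if_pos h]

lemma K_zero_cons (l : List ℕ) (κ : ℕ → ℕ) : K (0 :: l) κ = K l κ := by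
  by_cases h : IsP l.sum κ
  · rw [K_cons (by simpa using h), Finset.sum_eq_single κ]
    · rw [if_pos]
      intro i; exact ⟨le_rfl, h.1 (by omega)⟩
    · intro ν hν hne
      rw [if_neg]
      intro hh
      exact hne (eq_of_le_size h (mem_PF.1 hν) (fun i => (hh i).1))
    · intro h'; exact absurd (mem_PF.2 h) h'
  · have h1 : K l κ = 0 := by by_contra h'; exact h (K_ne_IsP h')
    rw [h1]
    by_contra h'
    have := K_ne_IsP h'
    simp at this
    exact h this

/-- The toggle between `κ` and `ρ`. -/
def tog (κ ρ ν : ℕ → ℕ) : ℕ → ℕ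
  | 0 => κ 0 + max (κ 1) (ρ 0) - ν 0
  | i + 1 => min (κ (i + 1)) (ρ i) + max (κ (i + 2)) (ρ (i + 1)) - ν (i + 1)

lemma list_sum_range (f : ℕ → ℕ) (B : ℕ) :
    ((List.range B).map f).sum = ∑ i ∈ range B, f i := by
  induction B with
  | zero => simp
  | succ B ih => rw [List.range_succ, List.map_append, List.sum_append, ih, Finset.sum_range_succ]; simp

lemma tog_props {κ ρ ν : ℕ → ℕ} (h1 : HS κ ν) (h2 : HS ν ρ) :
    HS κ (tog κ ρ ν) ∧ HS (tog κ ρ ν) ρ ∧ tog κ ρ (tog κ ρ ν) = ν := by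
  refine ⟨?_, ?_, ?_⟩
  · intro i
    cases i with
    | zero => have := h1 0; have := h2 0; simp only [tog, zero_add, add_assoc, Nat.reduceAdd] at *; constructor <;> omega
    | succ i =>
      have := h1 (i + 1); have := h2 (i + 1); have := h2 i; simp only [tog, zero_add, add_assoc, Nat.reduceAdd] at *; constructor <;> omega
  · intro i
    have h3 := h1 (i + 1); have h4 := h2 (i + 1); have h5 := h2 i
    have h6 := h1 i
    cases i with
    | zero => simp only [tog, zero_add, add_assoc, Nat.reduceAdd] at *; constructor <;> omega
    | succ i =>
      have := h2 i
      simp only [tog, zero_add, add_assoc, Nat.reduceAdd] at *; constructor <;> omega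
  · funext i
    cases i with
    | zero => have := h1 0; have := h2 0; simp only [tog, zero_add, add_assoc, Nat.reduceAdd] at *; omega
    | succ i =>
      have := h1 (i + 1); have := h2 (i + 1); have := h2 i; simp only [tog, zero_add, add_assoc, Nat.reduceAdd] at *; omega

lemma tog_sum {κ ρ ν : ℕ → ℕ} (h1 : HS κ ν) (h2 : HS ν ρ) (B : ℕ) :
    ∑ i ∈ range (B + 1), (tog κ ρ ν i + ν i) =
      ∑ i ∈ range (B + 1), κ i + ∑ i ∈ range B, ρ i + max (κ (B + 1)) (ρ B) := by
  induction B with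
  | zero => have := h1 0; have := h2 0; simp [tog] at *; omega
  | succ B ih =>
    rw [Finset.sum_range_succ, ih, Finset.sum_range_succ (fun i => κ i) (B + 1),
      Finset.sum_range_succ (fun i => ρ i) B]
    have := h1 (B + 1); have := h2 (B + 1); have := h2 B
    simp only [tog, zero_add, add_assoc, Nat.reduceAdd] at *
    omega

lemma tog_IsP {s a b : ℕ} {κ ρ ν : ℕ → ℕ} (hκ : IsP (a + (b + s)) κ) (hρ : IsP s ρ)
    (hν : IsP (b + s) ν) (h1 : HS κ ν) (h2 : HS ν ρ) : IsP (a + s) (tog κ ρ ν) := by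
  have hp := tog_props h1 h2
  have hs := tog_sum h1 h2 (a + (b + s))
  rw [hκ.zero (by omega), hρ.zero (by omega), hρ.sum' (by omega), hκ.sum' (by omega),
    Finset.sum_add_distrib, hν.sum' (by omega)] at hs
  refine IsP.mk' (B := a + (b + s) + 1) hp.1.anti ?_ ?_
  · have := (hp.1 (a + (b + s) + 1)).1
    rw [hκ.zero (by omega)] at this
    omega
  · simp at hs; omega

lemma K_swap (a b : ℕ) (l : List ℕ) (κ : ℕ → ℕ) : K (a :: b :: l) κ = K (b :: a :: l) κ := by
  by_cases h : IsP (a + (b + l.sum)) κ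
  · have h' : IsP (b + (a + l.sum)) κ := by
      rwa [show b + (a + l.sum) = a + (b + l.sum) by omega]
    rw [K_cons (by simpa using h), K_cons (by simpa using h')]
    have key : ∀ a b : ℕ, ∑ ν ∈ PF (b :: l).sum, (if HS κ ν then K (b :: l) ν else 0) =
        ∑ ρ ∈ PF l.sum, ∑ ν ∈ PF (b + l.sum), if HS κ ν ∧ HS ν ρ then K l ρ else 0 := by
      intro a b
      rw [Finset.sum_comm, List.sum_cons]
      apply Finset.sum_congr rfl
      intro ν hν
      rw [K_cons (mem_PF.1 hν)]
      split_ifs with hh <;> simp [hh]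
    rw [key a b, key b a]
    apply Finset.sum_congr rfl
    intro ρ hρ
    rw [← Finset.sum_filter, ← Finset.sum_filter]
    rw [Finset.sum_const, Finset.sum_const]
    congr 1
    apply Finset.card_bij' (fun ν _ => tog κ ρ ν) (fun ν _ => tog κ ρ ν)
    · intro ν hν
      simp only [Finset.mem_filter, mem_PF] at hν ⊢
      have := tog_props hν.2.1 hν.2.2
      exact ⟨tog_IsP h (mem_PF.1 hρ) hν.1 hν.2.1 hν.2.2, this.1, this.2.1⟩
    · intro ν hν
      simp only [Finset.mem_filter, mem_PF] at hν ⊢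
      have := tog_props hν.2.1 hν.2.2
      exact ⟨tog_IsP h' (mem_PF.1 hρ) hν.1 hν.2.1 hν.2.2, this.1, this.2.1⟩
    · intro ν hν
      simp only [Finset.mem_filter, mem_PF] at hν
      exact (tog_props hν.2.1 hν.2.2).2.2
    · intro ν hν
      simp only [Finset.mem_filter, mem_PF] at hν
      exact (tog_props hν.2.1 hν.2.2).2.2
  · have e1 : K (a :: b :: l) κ = 0 := by
      by_contra h'
      exact h (by simpa using K_ne_IsP h')
    have e2 : K (b :: a :: l) κ = 0 := by
      by_contra h'
      have := K_ne_IsP h'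
      simp only [List.sum_cons] at this
      exact h (by rwa [show a + (b + l.sum) = b + (a + l.sum) by omega])
    rw [e1, e2]

lemma K_perm {l l' : List ℕ} (h : l.Perm l') : ∀ κ, K l κ = K l' κ := by
  induction h with
  | nil => intro κ; rfl
  | cons a h ih => intro κ; simp only [K, h.sum_eq, ih]
  | swap a b l => intro κ; exact K_swap b a l κ
  | trans _ _ ih1 ih2 => intro κ; rw [ih1, ih2]

/-! ### Triangularity -/

lemma hs_size {a s : ℕ} {κ ν : ℕ → ℕ} (hκ : IsP (a + s) κ) (hν : IsP s ν) (h : HS κ ν) :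
    a ≤ κ 0 ∧ (a = κ 0 → ∀ i, ν i = κ (i + 1)) := by
  have h1 := hκ.sum' (B := a + s + 1) (by omega)
  rw [Finset.sum_range_succ'] at h1
  have h2 := hν.sum' (B := a + s) (by omega)
  have h3 : ∑ i ∈ range (a + s), κ (i + 1) ≤ ∑ i ∈ range (a + s), ν i :=
    Finset.sum_le_sum fun i _ => (h i).2
  refine ⟨by omega, ?_⟩
  intro ha
  have h4 : ∑ i ∈ range (a + s), κ (i + 1) = ∑ i ∈ range (a + s), ν i := by omega
  intro i
  by_cases hi : i < a + s
  · exact ((Finset.sum_eq_sum_iff_of_le (s := range (a + s)) (fun i _ => (h i).2)).1 h4 i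
      (by simpa using hi)).symm
  · rw [hκ.zero (by omega), hν.zero (by omega)]

lemma K_lex : ∀ (B : ℕ) (lam κ : ℕ → ℕ), (∀ i, B ≤ i → lam i = 0) →
    K ((List.range B).map lam) κ ≠ 0 →
    lam = κ ∨ ∃ i, (∀ j, j < i → lam j = κ j) ∧ lam i < κ i := by
  intro B
  induction B with
  | zero =>
    intro lam κ hz hK
    left
    have := K_ne_IsP hK
    simp [IsP_zero] at this
    rw [this]; funext i; exact hz i (by omega)
  | succ B ih =>
    intro lam κ hz hK
    rw [List.range_succ_eq_map, List.map_cons, List.map_map] at hK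
    have hP := K_ne_IsP hK
    rw [List.sum_cons] at hP
    rw [K_cons hP] at hK
    obtain ⟨ν, hν, hne⟩ := Finset.exists_ne_zero_of_sum_ne_zero hK
    have hh : HS κ ν := by by_contra h; simp [h] at hne
    rw [if_pos hh] at hne
    have h1 := hs_size hP (mem_PF.1 hν) hh
    rcases h1.1.lt_or_eq with hlt | heq
    · exact Or.inr ⟨0, by simp, hlt⟩
    · have h2 := h1.2 heq
      have h3 := ih (lam ∘ Nat.succ) ν (fun i hi => hz _ (by simp; omega)) hne
      rcases h3 with h3 | ⟨i, hi1, hi2⟩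
      · left
        funext i
        cases i with
        | zero => exact heq
        | succ i => rw [← h2, ← h3]; rfl
      · right
        refine ⟨i + 1, ?_, ?_⟩
        · intro j hj
          cases j with
          | zero => exact heq
          | succ j => rw [← h2, ← hi1 j (by omega)]; rfl
        · rw [← h2]; exact hi2

lemma K_diag : ∀ (B : ℕ) (lam : ℕ → ℕ), Antitone lam → (∀ i, B ≤ i → lam i = 0) →
    K ((List.range B).map lam) lam = 1 := by
  intro B
  induction B with
  | zero =>
    intro lam ha hz
    have : lam = 0 := by funext i; exact hz i (by omega)
    simp [K, this]
  | succ B ih =>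
    intro lam ha hz
    have ha' : Antitone (lam ∘ Nat.succ) := fun a b hab => ha (Nat.succ_le_succ hab)
    have hz' : ∀ i, B ≤ i → (lam ∘ Nat.succ) i = 0 := fun i hi => hz _ (by simp; omega)
    have hsum : ∀ (f : ℕ → ℕ) (B : ℕ), ((List.range B).map f).sum = ∑ i ∈ range B, f i := list_sum_range
    rw [List.range_succ_eq_map, List.map_cons, List.map_map]
    have hν : IsP ((List.range B).map (lam ∘ Nat.succ)).sum (lam ∘ Nat.succ) :=
      IsP.mk' ha' (hz' B le_rfl) (hsum _ _).symm
    have hP : IsP (lam 0 + ((List.range B).map (lam ∘ Nat.succ)).sum) lam := by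
      apply IsP.mk' (B := B + 1) ha (hz _ le_rfl)
      rw [Finset.sum_range_succ', hsum, add_comm]; rfl
    rw [K_cons hP, Finset.sum_eq_single (lam ∘ Nat.succ)]
    · rw [if_pos, ih _ ha' hz']
      intro i; exact ⟨ha (by simp), le_rfl⟩
    · intro ν hn hne
      rw [if_neg]
      intro hh
      apply hne
      funext i
      exact (hs_size hP (mem_PF.1 hn) hh).2 rfl i
    · intro h; exact absurd (mem_PF.2 hν) h

lemma K_rows : ∀ (l : List ℕ) (κ : ℕ → ℕ), K l κ ≠ 0 → κ l.length = 0 := by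
  intro l
  induction l with
  | nil => intro κ h; have := K_ne_IsP h; simp [IsP_zero] at this; simp [this]
  | cons a l ih =>
    intro κ hK
    have hP := K_ne_IsP hK
    rw [List.sum_cons] at hP
    rw [K_cons hP] at hK
    obtain ⟨ν, hν, hne⟩ := Finset.exists_ne_zero_of_sum_ne_zero hK
    have hh : HS κ ν := by by_contra h; simp [h] at hne
    rw [if_pos hh] at hne
    have := ih ν hne
    have := (hh l.length).2
    simp; omega

lemma K_inj {N : ℕ} (c : (ℕ → ℕ) → ℚ)
    (h : ∀ κ ∈ PF N, c κ ≠ 0 → ∃ B, κ B = 0 ∧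
      ∑ κ' ∈ PF N, c κ' * K ((List.range B).map κ) κ' = 0) :
    ∀ κ ∈ PF N, c κ = 0 := by
  by_contra hcon
  push Not at hcon
  obtain ⟨κ0, hκ0, hc0⟩ := hcon
  obtain ⟨κ, hκ, hmax⟩ := Finset.exists_max_image ((PF N).filter fun κ => c κ ≠ 0)
    (fun κ => toLex κ) ⟨κ0, Finset.mem_filter.2 ⟨hκ0, hc0⟩⟩
  rw [Finset.mem_filter] at hκ
  obtain ⟨B, hB, hs⟩ := h κ hκ.1 hκ.2
  have hκP := mem_PF.1 hκ.1
  rw [Finset.sum_eq_single κ] at hs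
  · rw [K_diag B κ hκP.1 (fun i hi => anti_zero hκP.1 hB hi)] at hs
    simp at hs
    exact hκ.2 hs
  · intro κ' hκ' hne
    by_contra hz
    have h1 : c κ' ≠ 0 := left_ne_zero_of_mul hz
    have h2 := right_ne_zero_of_mul hz
    have h3 := hmax κ' (Finset.mem_filter.2 ⟨hκ', h1⟩)
    rcases K_lex B κ κ' (fun i hi => anti_zero hκP.1 hB hi) h2 with h4 | ⟨i, hi1, hi2⟩
    · exact hne h4.symm
    · have : toLex κ < toLex κ' := ⟨i, hi1, hi2⟩
      exact absurd h3 (not_le.2 this)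
  · intro h'; exact absurd hκ.1 h'

lemma K_unique {N : ℕ} (c : (ℕ → ℕ) → ℚ)
    (h : ∀ l : List ℕ, l.sum = N → ∑ κ ∈ PF N, c κ * K l κ = 0) : ∀ κ ∈ PF N, c κ = 0 := by
  apply K_inj
  intro κ hκ _
  refine ⟨N, (mem_PF.1 hκ).2.1, ?_⟩
  by_cases hs : ((List.range N).map κ).sum = N
  · exact h _ hs
  · apply Finset.sum_eq_zero
    intro κ' hκ'
    rw [K_eq_zero (mem_PF.1 hκ') hs, mul_zero]

lemma K_vanish {N n : ℕ} (c : (ℕ → ℕ) → ℚ)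
    (h : ∀ l : List ℕ, l.length < n → ∑ κ ∈ PF N, c κ * K l κ = 0) :
    ∀ κ ∈ PF N, 1 ≤ n → κ (n - 1) = 0 → c κ = 0 := by
  intro κ hκ hn hk
  have := K_inj (N := N) (fun κ => if κ (n - 1) = 0 then c κ else 0) ?_ κ hκ
  · simpa [hk] using this
  · intro κ hκ hne
    have hk : κ (n - 1) = 0 := by by_contra h'; simp [h'] at hne
    refine ⟨n - 1, hk, ?_⟩
    rw [← h ((List.range (n - 1)).map κ) (by simp; omega)]
    apply Finset.sum_congr rfl
    intro κ' _
    by_cases hz : K ((List.range (n - 1)).map κ) κ' = 0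
    · simp [hz]
    · have := K_rows _ _ hz
      simp at this
      simp [this]

/-- Existence of the Schur expansion. -/
lemma K_exists {N : ℕ} (f : List ℕ → ℚ) (hperm : ∀ l l' : List ℕ, l.Perm l' → f l = f l')
    (hzero : ∀ l, f (0 :: l) = f l) (hsum : ∀ l, f l ≠ 0 → l.sum = N) :
    ∃ c : (ℕ → ℕ) → ℚ, ∀ l, f l = ∑ κ ∈ PF N, c κ * K l κ := by
  let Φ : (PF N → ℚ) →ₗ[ℚ] (PF N → ℚ) :=
    { toFun := fun c lam => ∑ κ : PF N, c κ * K ((List.range N).map lam.1) κ.1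
      map_add' := by
        intro x y; funext lam; simp [add_mul, Finset.sum_add_distrib]
      map_smul' := by
        intro x y; funext lam; simp [Finset.mul_sum, mul_assoc] }
  have hinj : Function.Injective Φ := by
    rw [injective_iff_map_eq_zero]
    intro c hc
    have := K_inj (N := N) (fun κ => if h : κ ∈ PF N then c ⟨κ, h⟩ else 0) ?_
    · funext κ
      have := this κ.1 κ.2
      simpa using this
    · intro κ hκ _
      refine ⟨N, (mem_PF.1 hκ).2.1, ?_⟩
      rw [← Finset.sum_coe_sort]
      have := congrFun hc ⟨κ, hκ⟩
      simp only [Φ, LinearMap.coe_mk, AddHom.coe_mk, Pi.zero_apply] at this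
      rw [← this]
      apply Finset.sum_congr rfl
      intro x _
      simp
  obtain ⟨c, hc⟩ := (LinearMap.injective_iff_surjective.1 hinj) (fun lam => f ((List.range N).map lam.1))
  refine ⟨fun κ => if h : κ ∈ PF N then c ⟨κ, h⟩ else 0, ?_⟩
  -- difference
  let g : List ℕ → ℚ := fun l => f l - ∑ κ ∈ PF N, (if h : κ ∈ PF N then c ⟨κ, h⟩ else 0) * K l κ
  have gperm : ∀ l l' : List ℕ, l.Perm l' → g l = g l' := by
    intro l l' h
    simp only [g, hperm l l' h, K_perm h]
  have gzero : ∀ l, g (0 :: l) = g l := by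
    intro l; simp only [g, hzero, K_zero_cons]
  have gsum : ∀ l, g l ≠ 0 → l.sum = N := by
    intro l hl
    by_contra hs
    apply hl
    have : f l = 0 := by by_contra h; exact hs (hsum l h)
    simp only [g, this]
    rw [Finset.sum_eq_zero, sub_zero]
    intro κ hκ
    rw [K_eq_zero (mem_PF.1 hκ) hs, mul_zero]
  have gN : ∀ lam ∈ PF N, g ((List.range N).map lam) = 0 := by
    intro lam hlam
    have := congrFun hc ⟨lam, hlam⟩
    simp only [Φ, LinearMap.coe_mk, AddHom.coe_mk] at this
    simp only [g]
    rw [← this, ← Finset.sum_coe_sort (PF N)]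
    simp
  have gpad : ∀ (k : ℕ) (l : List ℕ), g (l ++ List.replicate k 0) = g l := by
    intro k l
    rw [gperm _ _ List.perm_append_comm]
    induction k with
    | zero => simp
    | succ k ih => rw [List.replicate_succ, List.cons_append, gzero, ih]
  have gB : ∀ lam ∈ PF N, ∀ B, lam B = 0 → g ((List.range B).map lam) = 0 := by
    intro lam hlam B hB
    have hP := mem_PF.1 hlam
    have key : ∀ A C : ℕ, lam A = 0 → (List.range (A + C)).map lam =
        (List.range A).map lam ++ List.replicate C 0 := by
      intro A C hA
      rw [List.range_add, List.map_append]
      congr 1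
      rw [List.eq_replicate_iff]
      simp
      intro a _
      exact anti_zero hP.1 hA (by omega)
    have h1 := key B N hB
    have h2 := key N B hP.2.1
    rw [add_comm N B, h1] at h2
    rw [← gpad N, h2, gpad, gN lam hlam]
  intro l
  have : g l = 0 := by
    by_contra hne
    have hs := gsum l hne
    apply hne
    have hsort : (l.mergeSort (fun a b => decide (b ≤ a))).Perm l := List.mergeSort_perm _ _
    rw [← gperm _ _ hsort]
    set L := l.mergeSort (fun a b => decide (b ≤ a)) with hL
    have hLs : L.Pairwise (fun a b => b ≤ a) := by
      have := List.pairwise_mergeSort (le := fun a b : ℕ => decide (b ≤ a))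
        (by intro a b c; simp; omega) (by intro a b; simp; omega) l
      simpa using this
    have hLsum : L.sum = N := by rw [hsort.sum_eq]; exact hs
    let lam : ℕ → ℕ := fun i => L.getD i 0
    have hmap : (List.range L.length).map lam = L := by
      apply List.ext_getElem
      · simp
      · intro i h1 h2
        simp only [List.getElem_map, List.getElem_range, lam]
        exact List.getD_eq_getElem _ _ h2
    have ha : Antitone lam := by
      intro i j hij
      simp only [lam]
      by_cases hj : j < L.length
      · rw [List.getD_eq_getElem _ _ hj, List.getD_eq_getElem _ _ (by omega)]
        rcases hij.lt_or_eq with h | h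
        · exact List.pairwise_iff_getElem.1 hLs i j (by omega) hj h
        · subst h; exact le_rfl
      · rw [List.getD_eq_default _ _ (by omega)]; omega
    have hP : IsP N lam := by
      apply IsP.mk' (B := L.length) ha (List.getD_eq_default _ _ le_rfl)
      rw [← hLsum]
      conv_rhs => rw [← hmap]
      rw [list_sum_range]
    have := gB lam (mem_PF.2 hP) L.length (List.getD_eq_default _ _ le_rfl)
    rwa [hmap] at this
  simp only [g] at this
  linarith

end

end GNet

namespace GNet

section

open Finset


/-! ### The graph side -/

/-- Stable sets. -/
def Stab {V : Type*} (G : SimpleGraph V) (T : Finset V) : Prop :=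
  ∀ u ∈ T, ∀ v ∈ T, ¬ G.Adj u v

/-- Number of proper colourings of `W` with prescribed colour class sizes. -/
noncomputable def XL {V : Type*} [DecidableEq V] (G : SimpleGraph V) : List ℕ → Finset V → ℚ
  | [], W => if W = ∅ then 1 else 0
  | a :: l, W => ∑ T ∈ W.powersetCard a, if Stab G T then XL G l (W \ T) else 0

section XLlemmas
variable {V : Type*} [DecidableEq V] (G : SimpleGraph V)

lemma XL_zero_cons (l : List ℕ) (W : Finset V) : XL G (0 :: l) W = XL G l W := by
  simp [XL, Stab]

lemma XL_swap (a b : ℕ) (l : List ℕ) (W : Finset V) :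
    XL G (a :: b :: l) W = XL G (b :: a :: l) W := by
  have key : ∀ a b : ℕ, XL G (a :: b :: l) W = ∑ T ∈ W.powersetCard a,
      ∑ U ∈ (W \ T).powersetCard b,
        if Stab G T ∧ Stab G U then XL G l (W \ (T ∪ U)) else 0 := by
    intro a b
    simp only [XL]
    apply Finset.sum_congr rfl
    intro T _
    by_cases h : Stab G T
    · simp only [h, if_true, true_and, sdiff_sdiff_left, Finset.sup_eq_union]
    · simp [h]
  rw [key a b, key b a]
  rw [Finset.sum_comm' (t' := W.powersetCard b) (s' := fun U => (W \ U).powersetCard a)]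
  · apply Finset.sum_congr rfl
    intro U _
    apply Finset.sum_congr rfl
    intro T _
    rw [Finset.union_comm]
    simp only [and_comm]
  · intro T U
    simp only [Finset.mem_powersetCard, Finset.subset_sdiff]
    constructor
    · rintro ⟨⟨h1, h2⟩, ⟨h3, h4⟩, h5⟩
      exact ⟨⟨⟨h1, h4.symm⟩, h2⟩, h3, h5⟩
    · rintro ⟨⟨⟨h1, h4⟩, h2⟩, h3, h5⟩
      exact ⟨⟨h1, h2⟩, ⟨h3, h4.symm⟩, h5⟩

lemma XL_perm {l l' : List ℕ} (h : l.Perm l') : ∀ W, XL G l W = XL G l' W := by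
  induction h with
  | nil => intro W; rfl
  | cons a h ih => intro W; simp only [XL, ih]
  | swap a b l => intro W; exact XL_swap G b a l W
  | trans _ _ ih1 ih2 => intro W; rw [ih1, ih2]

lemma XL_ne_cons {a : ℕ} {l : List ℕ} {W : Finset V} (h : XL G (a :: l) W ≠ 0) :
    ∃ T, T ⊆ W ∧ T.card = a ∧ Stab G T ∧ XL G l (W \ T) ≠ 0 := by
  simp only [XL] at h
  obtain ⟨T, hT, hne⟩ := Finset.exists_ne_zero_of_sum_ne_zero h
  rw [Finset.mem_powersetCard] at hT
  have hs : Stab G T := by by_contra h'; simp [h'] at hne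
  rw [if_pos hs] at hne
  exact ⟨T, hT.1, hT.2, hs, hne⟩

lemma XL_sum : ∀ (l : List ℕ) (W : Finset V), XL G l W ≠ 0 → l.sum = W.card := by
  intro l
  induction l with
  | nil =>
    intro W h
    simp only [XL] at h
    have : W = ∅ := by by_contra h'; simp [h'] at h
    simp [this]
  | cons a l ih =>
    intro W h
    obtain ⟨T, h1, h2, _, h4⟩ := XL_ne_cons G h
    have := ih _ h4
    rw [Finset.card_sdiff_of_subset h1] at this
    have := Finset.card_le_card h1
    simp; omega

lemma XL_clique : ∀ (l : List ℕ) (W Q : Finset V), XL G l W ≠ 0 → Q ⊆ W →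
    (∀ u ∈ Q, ∀ v ∈ Q, u ≠ v → G.Adj u v) → Q.card ≤ l.length := by
  intro l
  induction l with
  | nil =>
    intro W Q h hQ _
    have := XL_sum G _ _ h
    have h2 := Finset.card_le_card hQ
    rw [← this] at h2
    simpa using h2
  | cons a l ih =>
    intro W Q h hQ hc
    obtain ⟨T, h1, h2, h3, h4⟩ := XL_ne_cons G h
    have h5 := ih (W \ T) (Q \ T) h4 (Finset.sdiff_subset_sdiff hQ le_rfl)
      (fun u hu v hv => hc u (Finset.mem_sdiff.1 hu).1 v (Finset.mem_sdiff.1 hv).1)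
    have h6 : (Q ∩ T).card ≤ 1 := by
      rw [Finset.card_le_one]
      intro u hu v hv
      rw [Finset.mem_inter] at hu hv
      by_contra hne
      exact h3 u hu.2 v hv.2 (hc u hu.1 v hv.1 hne)
    have := Finset.card_sdiff_add_card_inter Q T
    simp; omega

lemma cf_exists (W : Finset V) :
    ∃ c : (ℕ → ℕ) → ℚ, ∀ l, XL G l W = ∑ κ ∈ PF W.card, c κ * K l κ :=
  K_exists (fun l => XL G l W) (fun _ _ h => XL_perm G h W) (fun l => XL_zero_cons G l W)
    (fun l h => XL_sum G l W h)

/-- Schur coefficients of the chromatic symmetric function of `G[W]`. -/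
noncomputable def cf (W : Finset V) : (ℕ → ℕ) → ℚ := (cf_exists G W).choose

lemma cf_spec {W : Finset V} {M : ℕ} (h : W.card = M) (l : List ℕ) :
    XL G l W = ∑ κ ∈ PF M, cf G W κ * K l κ := by
  subst h; exact (cf_exists G W).choose_spec l

lemma cf_skew {W : Finset V} {M a : ℕ} (h : W.card = M) (ha : a ≤ M) (l : List ℕ)
    (hl : l.sum = M - a) :
    ∑ ρ ∈ PF (M - a), (∑ κ ∈ PF M, if HS κ ρ then cf G W κ else 0) * K l ρ =
      XL G (a :: l) W := by
  rw [cf_spec G h]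
  simp only [Finset.sum_mul]
  rw [Finset.sum_comm]
  apply Finset.sum_congr rfl
  intro κ hκ
  have h1 := mem_PF.1 hκ
  rw [K_cons (by rw [hl]; convert h1 using 1; omega), hl, Finset.mul_sum]
  apply Finset.sum_congr rfl
  intro ρ _
  split_ifs <;> simp

/-- Weight of a set `S` relative to `P`. -/
noncomputable def wt (P S : Finset V) : ℚ :=
  ∑ J ∈ (S ∩ P).powerset, if Stab G (S \ J) then (-1 : ℚ) ^ (S \ J).card else 0

lemma regroup (U P : Finset V) (hP : P ⊆ U) (r : ℕ) (l : List ℕ) :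
    ∑ j ∈ range (r + 1), (-1 : ℚ) ^ (r - j) * ∑ J ∈ P.powersetCard j,
      XL G ((r - j) :: l) (U \ J) =
    ∑ S ∈ U.powersetCard r, wt G P S * XL G l (U \ S) := by
  simp only [wt, XL, Finset.mul_sum, Finset.sum_mul]
  simp only [Finset.sum_sigma']
  refine Finset.sum_bij' (fun x _ => ⟨x.2.1 ∪ x.2.2, x.2.1⟩)
    (fun y _ => ⟨y.2.card, y.2, y.1 \ y.2⟩) ?_ ?_ ?_ ?_ ?_
  · rintro ⟨j, J, T⟩ h
    simp only [Finset.mem_sigma, Finset.mem_powersetCard, Finset.mem_range,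
      Finset.subset_sdiff, Finset.mem_powerset] at h ⊢
    obtain ⟨h1, ⟨h2, h3⟩, ⟨h4, h5⟩, h6⟩ := h
    refine ⟨⟨Finset.union_subset (h2.trans hP) h4, ?_⟩, ?_⟩
    · rw [Finset.card_union_of_disjoint h5.symm]; omega
    · exact Finset.subset_inter Finset.subset_union_left h2
  · rintro ⟨S, J⟩ h
    simp only [Finset.mem_sigma, Finset.mem_powersetCard, Finset.mem_range,
      Finset.subset_sdiff, Finset.mem_powerset, Finset.subset_inter_iff] at h ⊢
    obtain ⟨⟨h1, h2⟩, h3, h4⟩ := h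
    have := Finset.card_le_card h3
    refine ⟨by omega, ⟨h4, trivial⟩, ⟨Finset.sdiff_subset.trans h1, Finset.sdiff_disjoint⟩, ?_⟩
    rw [Finset.card_sdiff_of_subset h3]; omega
  · rintro ⟨j, J, T⟩ h
    simp only [Finset.mem_sigma, Finset.mem_powersetCard, Finset.mem_range,
      Finset.subset_sdiff] at h
    obtain ⟨h1, ⟨h2, h3⟩, ⟨h4, h5⟩, h6⟩ := h
    simp only [h3]
    rw [Finset.union_sdiff_cancel_left h5.symm]
  · rintro ⟨S, J⟩ h
    simp only [Finset.mem_sigma, Finset.mem_powersetCard,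
      Finset.mem_powerset, Finset.subset_inter_iff] at h
    simp only [Finset.union_sdiff_of_subset h.2.1]
  · rintro ⟨j, J, T⟩ h
    simp only [Finset.mem_sigma, Finset.mem_powersetCard, Finset.mem_range,
      Finset.subset_sdiff] at h
    obtain ⟨h1, ⟨h2, h3⟩, ⟨h4, h5⟩, h6⟩ := h
    simp only
    rw [Finset.union_sdiff_cancel_left h5.symm, sdiff_sdiff_left, Finset.sup_eq_union, h6]
    split_ifs <;> simp

lemma wt_free {P S : Finset V} {p : V} (hp : p ∈ P) (hS : p ∈ S)
    (hadj : ∀ v ∈ S, ¬ G.Adj p v) : wt G P S = 0 := by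
  have hins : S ∩ P = insert p ((S ∩ P).erase p) := by
    rw [Finset.insert_erase]; exact Finset.mem_inter.2 ⟨hS, hp⟩
  unfold wt
  rw [hins, Finset.sum_powerset_insert (Finset.notMem_erase _ _), ← Finset.sum_add_distrib]
  apply Finset.sum_eq_zero
  intro J hJ
  rw [Finset.mem_powerset] at hJ
  have hpJ : p ∉ J := fun h => Finset.notMem_erase _ _ (hJ h)
  have e : S \ J = insert p (S \ insert p J) := by
    ext v
    simp only [Finset.mem_sdiff, Finset.mem_insert]
    by_cases hv : v = p
    · subst hv; simp [hS, hpJ]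
    · simp [hv]
  have hn : p ∉ S \ insert p J := by simp
  have hst : Stab G (S \ J) ↔ Stab G (S \ insert p J) := by
    constructor
    · intro h u hu v hv
      exact h u (by rw [e]; exact Finset.mem_insert_of_mem hu) v
        (by rw [e]; exact Finset.mem_insert_of_mem hv)
    · intro h u hu v hv hadj'
      rw [e, Finset.mem_insert] at hu hv
      rcases hu with rfl | hu
      · rcases hv with rfl | hv
        · exact G.loopless.irrefl _ hadj'
        · exact hadj v (Finset.mem_sdiff.1 hv).1 hadj'
      · rcases hv with rfl | hv
        · exact hadj u (Finset.mem_sdiff.1 hu).1 hadj'.symm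
        · exact h u hu v hv hadj'
  have hc : (S \ J).card = (S \ insert p J).card + 1 := by
    rw [e, Finset.card_insert_of_notMem hn]
  rw [hc]
  simp only [hst]
  split_ifs
  · rw [pow_succ]; ring
  · simp

lemma wt_edge {P S : Finset V} {u v : V} (hu : u ∈ S) (hv : v ∈ S) (hup : u ∉ P) (hvp : v ∉ P)
    (hadj : G.Adj u v) : wt G P S = 0 := by
  apply Finset.sum_eq_zero
  intro J hJ
  rw [Finset.mem_powerset, Finset.subset_inter_iff] at hJ
  rw [if_neg]
  intro h
  exact h u (Finset.mem_sdiff.2 ⟨hu, fun h' => hup (hJ.2 h')⟩) v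
    (Finset.mem_sdiff.2 ⟨hv, fun h' => hvp (hJ.2 h')⟩) hadj

lemma wt_single {P : Finset V} {u : V} (hup : u ∉ P) : wt G P {u} = -1 := by
  have : ({u} : Finset V) ∩ P = ∅ := by
    rw [Finset.singleton_inter_of_notMem hup]
  simp [wt, this, Stab]

lemma wt_pair {P : Finset V} {u p : V} (hup : u ∉ P) (hp : p ∈ P) (hadj : G.Adj u p) :
    wt G P {u, p} = -1 := by
  have hne : u ≠ p := hadj.ne
  have h1 : ({u, p} : Finset V) ∩ P = {p} := by
    rw [Finset.insert_inter_of_notMem hup, Finset.singleton_inter_of_mem hp]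
  have h2 : ({u, p} : Finset V) \ {p} = {u} := by
    ext v; simp only [Finset.mem_sdiff, Finset.mem_insert, Finset.mem_singleton]
    constructor
    · rintro ⟨h | h, h'⟩
      · exact h
      · exact absurd h h'
    · rintro rfl; exact ⟨Or.inl rfl, hne⟩
  have h3 : ¬ Stab G ({u, p} : Finset V) := by
    intro h; exact h u (by simp) p (by simp) hadj
  have h4 : Stab G ({u} : Finset V) := by simp [Stab]
  rw [wt, h1]
  have : ({p} : Finset V).powerset = {∅, {p}} := by
    ext; simp
  rw [this, Finset.sum_pair (by simp [eq_comm]), Finset.sdiff_empty, if_neg h3, h2, if_pos h4]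
  simp

end XLlemmas

/-! ### Generalized nets -/

lemma gn_ll {n m : ℕ} (i j : Fin n) : (genNet n m).Adj (Sum.inl i) (Sum.inl j) ↔ i ≠ j := by
  simp [genNet, SimpleGraph.fromRel_adj]

lemma gn_lr {n m : ℕ} (i : Fin n) (j : Fin m) :
    (genNet n m).Adj (Sum.inl i) (Sum.inr j) ↔ (i : ℕ) = j := by
  simp [genNet, SimpleGraph.fromRel_adj]

lemma gn_rl {n m : ℕ} (i : Fin n) (j : Fin m) :
    (genNet n m).Adj (Sum.inr j) (Sum.inl i) ↔ (i : ℕ) = j := by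
  simp [genNet, SimpleGraph.fromRel_adj]

lemma gn_rr {n m : ℕ} (i j : Fin m) : ¬ (genNet n m).Adj (Sum.inr i) (Sum.inr j) := by
  simp [genNet, SimpleGraph.fromRel_adj]

/-- Pendant vertices. -/
def Pend (n m : ℕ) : Finset (Fin n ⊕ Fin m) := (univ : Finset (Fin m)).map ⟨Sum.inr, Sum.inr_injective⟩

lemma inl_Pend {n m : ℕ} (i : Fin n) : Sum.inl i ∉ Pend n m := by simp [Pend]
lemma inr_Pend {n m : ℕ} (i : Fin m) : Sum.inr i ∈ Pend n m := by simp [Pend]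

/-- Anchor of a pendant. -/
def anc {n m : ℕ} (hmn : m ≤ n) (j : Fin m) : Fin n := Fin.castLE hmn j

lemma wt_gn {n m : ℕ} (hmn : m ≤ n) (S : Finset (Fin n ⊕ Fin m)) (hS : S.Nonempty) :
    wt (genNet n m) (Pend n m) S =
      -(∑ i : Fin n, if S = {Sum.inl i} then (1 : ℚ) else 0)
      - ∑ j : Fin m, if S = {Sum.inl (anc hmn j), Sum.inr j} then (1 : ℚ) else 0 := by
  by_cases hfree : ∃ j : Fin m, Sum.inr j ∈ S ∧ Sum.inl (anc hmn j) ∉ S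
  · obtain ⟨j, hj, hna⟩ := hfree
    rw [wt_free _ (inr_Pend j) hj]
    · rw [Finset.sum_eq_zero, Finset.sum_eq_zero]
      · simp
      · intro k _
        rw [if_neg]
        rintro rfl
        simp at hj
        subst hj
        simp at hna
      · intro i _
        rw [if_neg]
        rintro rfl
        simp at hj
    · rintro (i | i) hi h
      · rw [gn_rl] at h
        apply hna
        have : anc hmn j = i := Fin.ext (by simp [anc, h])
        rwa [this]
      · exact gn_rr _ _ h
  · push Not at hfree
    by_cases htwo : ∃ i i' : Fin n, i ≠ i' ∧ Sum.inl i ∈ S ∧ Sum.inl i' ∈ S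
    · obtain ⟨i, i', hne, hi, hi'⟩ := htwo
      rw [wt_edge _ hi hi' (inl_Pend i) (inl_Pend i') ((gn_ll i i').2 hne)]
      rw [Finset.sum_eq_zero, Finset.sum_eq_zero]
      · simp
      · intro k _
        rw [if_neg]
        rintro rfl
        simp at hi hi'
        exact hne (hi.trans hi'.symm)
      · intro k _
        rw [if_neg]
        rintro rfl
        simp at hi hi'
        exact hne (hi.trans hi'.symm)
    · push Not at htwo
      obtain ⟨i, hi⟩ : ∃ i : Fin n, Sum.inl i ∈ S := by
        obtain ⟨v, hv⟩ := hS
        rcases v with i | j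
        · exact ⟨i, hv⟩
        · exact ⟨_, hfree j hv⟩
      have hl : ∀ i' : Fin n, Sum.inl i' ∈ S → i' = i := by
        intro i' h'
        by_contra hne
        exact htwo i' i hne h' hi
      by_cases hr : ∃ j : Fin m, Sum.inr j ∈ S
      · obtain ⟨j, hj⟩ := hr
        have hij := hl _ (hfree j hj)
        subst hij
        have hSe : S = {Sum.inl (anc hmn j), Sum.inr j} := by
          ext v
          rcases v with v | v
          · simp
            exact ⟨hl v, fun h => h ▸ hi⟩
          · simp
            constructor
            · intro h
              have := hl _ (hfree v h)
              exact Fin.castLE_injective hmn this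
            · rintro rfl; exact hj
        rw [hSe, wt_pair _ (inl_Pend _) (inr_Pend _) ((gn_lr _ _).2 (by simp [anc]))]
        rw [Finset.sum_eq_zero, Finset.sum_eq_single j]
        · simp
        · intro k _ hk
          rw [if_neg]
          intro h
          have : (Sum.inr k : Fin n ⊕ Fin m) ∈ ({Sum.inl (anc hmn j), Sum.inr j} : Finset _) := by
            rw [h]; simp
          simp at this
          exact hk this
        · simp
        · intro k _
          rw [if_neg]
          intro h
          have : (Sum.inr j : Fin n ⊕ Fin m) ∈ ({Sum.inl k} : Finset _) := by
            rw [← h]; simp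
          simp at this
      · push Not at hr
        have hSe : S = {Sum.inl i} := by
          ext v
          rcases v with v | v
          · simp
            exact ⟨hl v, fun h => h ▸ hi⟩
          · simp [hr v]
        rw [hSe, wt_single _ (inl_Pend i), Finset.sum_eq_single i]
        · rw [Finset.sum_eq_zero]
          · simp
          · intro k _
            rw [if_neg]
            intro h
            have : (Sum.inr k : Fin n ⊕ Fin m) ∈ ({Sum.inl i} : Finset _) := by
              rw [h]; simp
            simp at this
        · intro k _ hk
          rw [if_neg]
          intro h
          simp at h
          exact hk h.symm
        · simp

/-- The sum over sets of `j` pendants. -/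
noncomputable def dd (n m : ℕ) (j : ℕ) (κ : ℕ → ℕ) : ℚ :=
  ∑ J ∈ (Pend n m).powersetCard j, cf (genNet n m) (univ \ J) κ

/-- Deleting a body vertex. -/
noncomputable def CC1 (n m : ℕ) (κ : ℕ → ℕ) : ℚ :=
  ∑ i : Fin n, cf (genNet n m) (univ \ {Sum.inl i}) κ

/-- Deleting an anchor and its pendant. -/
noncomputable def CC2 {n m : ℕ} (hmn : m ≤ n) (κ : ℕ → ℕ) : ℚ :=
  ∑ j : Fin m, cf (genNet n m) (univ \ {Sum.inl (anc hmn j), Sum.inr j}) κ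

lemma card_univ_sdiff {n m : ℕ} (J : Finset (Fin n ⊕ Fin m)) :
    (univ \ J).card = n + m - J.card := by
  rw [Finset.card_sdiff_of_subset (Finset.subset_univ _)]
  simp

lemma gn_hrel {n m : ℕ} (hmn : m ≤ n) : ∀ r, 1 ≤ r → r ≤ n + m → ∀ ρ ∈ PF (n + m - r),
    ∑ j ∈ range (r + 1), (-1 : ℚ) ^ (r - j) *
      (∑ κ ∈ PF (n + m - j), if HS κ ρ then dd n m j κ else 0)
    + (if r = 1 then CC1 n m ρ else 0) + (if r = 2 then CC2 hmn ρ else 0) = 0 := by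
  intro r hr1 hrN
  apply K_unique
  intro l hl
  have e1 : ∑ ρ ∈ PF (n + m - r), (∑ j ∈ range (r + 1), (-1 : ℚ) ^ (r - j) *
      (∑ κ ∈ PF (n + m - j), if HS κ ρ then dd n m j κ else 0)) * K l ρ =
      ∑ j ∈ range (r + 1), (-1 : ℚ) ^ (r - j) * ∑ J ∈ (Pend n m).powersetCard j,
        XL (genNet n m) ((r - j) :: l) (univ \ J) := by
    simp only [Finset.sum_mul]
    rw [Finset.sum_comm]
    apply Finset.sum_congr rfl
    intro j hj
    rw [Finset.mem_range] at hj
    simp only [mul_assoc]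
    rw [← Finset.mul_sum]
    congr 1
    have : ∀ J ∈ (Pend n m).powersetCard j, XL (genNet n m) ((r - j) :: l) (univ \ J) =
        ∑ ρ ∈ PF (n + m - r), (∑ κ ∈ PF (n + m - j),
          if HS κ ρ then cf (genNet n m) (univ \ J) κ else 0) * K l ρ := by
      intro J hJ
      rw [Finset.mem_powersetCard] at hJ
      rw [← cf_skew (genNet n m) (M := n + m - j) (by rw [card_univ_sdiff, hJ.2]) (by omega) l
        (by omega)]
      rw [show n + m - j - (r - j) = n + m - r by omega]
    rw [Finset.sum_congr rfl this, Finset.sum_comm]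
    apply Finset.sum_congr rfl
    intro ρ _
    rw [← Finset.sum_mul, Finset.sum_comm]
    congr 1
    apply Finset.sum_congr rfl
    intro κ _
    split_ifs with h
    · rfl
    · simp
  have e2 : ∑ ρ ∈ PF (n + m - r), (if r = 1 then CC1 n m ρ else 0) * K l ρ =
      ∑ S ∈ (univ : Finset (Fin n ⊕ Fin m)).powersetCard r,
        (∑ i : Fin n, if S = {Sum.inl i} then (1 : ℚ) else 0) * XL (genNet n m) l (univ \ S) := by
    simp only [Finset.sum_mul, ite_mul, one_mul, zero_mul]
    rw [Finset.sum_comm (s := powersetCard r univ)]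
    simp only [Finset.sum_ite_eq', Finset.mem_powersetCard, Finset.subset_univ, true_and,
      Finset.card_singleton]
    by_cases h1 : r = 1
    · subst h1
      simp only [if_true, CC1, Finset.sum_mul]
      rw [Finset.sum_comm]
      apply Finset.sum_congr rfl
      intro i _
      rw [cf_spec (genNet n m) (M := n + m - 1) (by rw [card_univ_sdiff]; simp)]
    · simp [h1, Ne.symm h1]
  have e3 : ∑ ρ ∈ PF (n + m - r), (if r = 2 then CC2 hmn ρ else 0) * K l ρ =
      ∑ S ∈ (univ : Finset (Fin n ⊕ Fin m)).powersetCard r,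
        (∑ j : Fin m, if S = {Sum.inl (anc hmn j), Sum.inr j} then (1 : ℚ) else 0) *
          XL (genNet n m) l (univ \ S) := by
    simp only [Finset.sum_mul, ite_mul, one_mul, zero_mul]
    rw [Finset.sum_comm (s := powersetCard r univ)]
    have hc : ∀ j : Fin m, ({Sum.inl (anc hmn j), Sum.inr j} : Finset (Fin n ⊕ Fin m)).card = 2 := by
      intro j; rw [Finset.card_pair]; simp
    simp only [Finset.sum_ite_eq', Finset.mem_powersetCard, Finset.subset_univ, true_and, hc]
    by_cases h1 : r = 2
    · subst h1
      simp only [if_true, CC2, Finset.sum_mul]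
      rw [Finset.sum_comm]
      apply Finset.sum_congr rfl
      intro i _
      rw [cf_spec (genNet n m) (M := n + m - 2) (by rw [card_univ_sdiff, hc])]
    · simp [h1, Ne.symm h1]
  simp only [add_mul, Finset.sum_add_distrib]
  rw [e1, e2, e3, regroup _ _ _ (Finset.subset_univ _), ← Finset.sum_add_distrib,
    ← Finset.sum_add_distrib]
  apply Finset.sum_eq_zero
  intro S hS
  rw [Finset.mem_powersetCard] at hS
  rw [wt_gn hmn S (Finset.card_pos.1 (by omega))]
  ring

lemma gn_hvan {n m : ℕ} (hmn : m ≤ n) : ∀ k, 1 ≤ k → k ≤ n + m → ∀ ν ∈ PF (n + m - k),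
    ν (k - 1) = 0 → dd n m k ν = 0 := by
  intro k hk _ ν hν hz
  apply Finset.sum_eq_zero
  intro J hJ
  rw [Finset.mem_powersetCard] at hJ
  have hkm : k ≤ m := by
    have := Finset.card_le_card hJ.1
    simp [Pend] at this
    omega
  refine K_vanish (N := n + m - k) (n := n) (cf (genNet n m) (univ \ J)) ?_ ν hν (by omega)
    (anti_zero (mem_PF.1 hν).1 hz (by omega))
  intro l hl
  rw [← cf_spec (genNet n m) (by rw [card_univ_sdiff, hJ.2])]
  by_contra hne
  have := XL_clique _ l _ ((univ : Finset (Fin n)).map ⟨Sum.inl, Sum.inl_injective⟩) hne ?_ ?_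
  · simp at this; omega
  · intro v hv
    simp only [Finset.mem_map, Finset.mem_univ, true_and, Function.Embedding.coeFn_mk] at hv
    obtain ⟨i, rfl⟩ := hv
    simp only [Finset.mem_sdiff, Finset.mem_univ, true_and]
    intro h
    exact inl_Pend i (hJ.1 h)
  · intro u hu v hv hne
    simp only [Finset.mem_map, Finset.mem_univ, true_and, Function.Embedding.coeFn_mk] at hu hv
    obtain ⟨i, rfl⟩ := hu
    obtain ⟨j, rfl⟩ := hv
    rw [gn_ll]
    rintro rfl
    exact hne rfl

lemma gn_rec {n m : ℕ} (hmn : m ≤ n) (hN : 2 ≤ n + m) : ∀ σ ∈ PF (n + m - 1),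
    cf (genNet n m) univ (app σ) = CC1 n m σ +
      ∑ τ ∈ PF (n + m - 2), if app τ = σ then CC2 hmn τ else 0 := by
  intro σ hσ
  have := abs_rec (n + m) hN (dd n m) (CC1 n m) (CC2 hmn) (gn_hrel hmn) (gn_hvan hmn) σ hσ
  rw [← this]
  simp [dd]

end

end GNet

namespace GNet

section

open Finset


/-- List of multiplicities of the entries `M, M-1, …, 1`. -/
def toL (μ : ℕ → ℕ) : ℕ → List ℕ
  | 0 => []
  | M + 1 => μ (M + 1) :: toL μ M

lemma toL_congr {μ μ' : ℕ → ℕ} : ∀ M, (∀ i, i ≤ M → μ i = μ' i) → toL μ M = toL μ' M := by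
  intro M
  induction M with
  | zero => intro _; rfl
  | succ M ih =>
    intro h
    simp only [toL]
    rw [h _ le_rfl, ih (fun i hi => h i (by omega))]

lemma toL_surj : ∀ l : List ℕ, ∃ (μ : ℕ → ℕ) (M : ℕ), μ 0 = 0 ∧ (∀ i, M < i → μ i = 0) ∧
    toL μ M = l := by
  intro l
  induction l with
  | nil => exact ⟨0, 0, rfl, fun _ _ => rfl, rfl⟩
  | cons a l ih =>
    obtain ⟨μ, M, h0, h1, h2⟩ := ih
    refine ⟨Function.update μ (M + 1) a, M + 1, ?_, ?_, ?_⟩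
    · rw [Function.update_of_ne (by omega), h0]
    · intro i hi
      rw [Function.update_of_ne (by omega), h1 i (by omega)]
    · simp only [toL, Function.update_self]
      rw [← h2]
      congr 1
      apply toL_congr
      intro i hi
      rw [Function.update_of_ne (by omega)]

lemma ncard_fiber {α β : Type*} {A : Set α} (hA : A.Finite) (g : α → β) (B : Finset β)
    (h : ∀ a ∈ A, g a ∈ B) : A.ncard = ∑ b ∈ B, {a ∈ A | g a = b}.ncard := by
  lift A to Finset α using hA
  rw [Set.ncard_coe_finset, Finset.card_eq_sum_card_fiberwise (t := B) (f := g) h]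
  apply Finset.sum_congr rfl
  intro b _
  rw [← Set.ncard_coe_finset]
  congr 1
  ext a
  simp

lemma ncard_bij {α β : Type*} {A : Set α} {B : Set β} (f : α → β) (g : β → α)
    (hf : ∀ a ∈ A, f a ∈ B) (hg : ∀ b ∈ B, g b ∈ A) (h1 : ∀ a ∈ A, g (f a) = a)
    (h2 : ∀ b ∈ B, f (g b) = b) : A.ncard = B.ncard := by
  apply Set.ncard_congr (fun a _ => f a) hf
  · intro a b ha hb hab
    rw [← h1 a ha, ← h1 b hb, hab]
  · intro b hb
    exact ⟨g b, hg b hb, h2 b hb⟩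

/-- Functions with finite support domain and bounded values form a finite set. -/
lemma finite_bdd {α : Type*} (D : Set α) (hD : D.Finite) (M : ℕ) :
    {f : α → ℕ | (∀ c, c ∉ D → f c = 0) ∧ ∀ c ∈ D, f c ≤ M}.Finite := by
  have : Finite D := hD
  have hfin : {f : D → ℕ | ∀ c, f c ∈ Set.Iic M}.Finite :=
    Set.Finite.pi' (fun _ => Set.finite_Iic M)
  apply Set.Finite.of_injOn (f := fun (f : α → ℕ) (c : D) => f c) ?_ ?_ hfin
  · rintro f ⟨_, h⟩ c
    exact h c c.2
  · rintro f ⟨h1, _⟩ g ⟨h2, _⟩ hfg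
    funext c
    by_cases hc : c ∈ D
    · exact congrFun hfg ⟨c, hc⟩
    · rw [h1 c hc, h2 c hc]

/-! ### Colourings -/

section Col
variable {V : Type*} [Fintype V] [DecidableEq V] (G : SimpleGraph V)

/-- Colourings of `W` by `1..M` with prescribed multiplicities. -/
def ColS (μ : ℕ → ℕ) (M : ℕ) (W : Finset V) : Set (V → ℕ) :=
  {f | (∀ v, v ∉ W → f v = 0) ∧ (∀ v ∈ W, 1 ≤ f v ∧ f v ≤ M) ∧
    (∀ u ∈ W, ∀ v ∈ W, G.Adj u v → f u ≠ f v) ∧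
    ∀ i, 1 ≤ i → i ≤ M → (W.filter (fun v => f v = i)).card = μ i}

lemma ColS_finite (μ : ℕ → ℕ) (M : ℕ) (W : Finset V) : (ColS G μ M W).Finite := by
  apply (finite_bdd (W : Set V) W.finite_toSet M).subset
  rintro f ⟨h1, h2, _⟩
  exact ⟨fun c hc => h1 c (by simpa using hc), fun c hc => (h2 c (by simpa using hc)).2⟩

lemma ColS_card (μ : ℕ → ℕ) : ∀ (M : ℕ) (W : Finset V),
    ((ColS G μ M W).ncard : ℚ) = XL G (toL μ M) W := by
  intro M
  induction M with
  | zero =>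
    intro W
    simp only [toL, XL]
    split_ifs with h
    · subst h
      have : ColS G μ 0 ∅ = {0} := by
        ext f
        simp only [ColS, Set.mem_setOf_eq, Set.mem_singleton_iff]
        constructor
        · rintro ⟨h, _⟩; funext v; exact h v (by simp)
        · rintro rfl
          refine ⟨by simp, by simp, by simp, ?_⟩
          intro i h1 h2; omega
      rw [this]; simp
    · have : ColS G μ 0 W = ∅ := by
        rw [Set.eq_empty_iff_forall_notMem]
        rintro f ⟨_, h2, _⟩
        obtain ⟨v, hv⟩ := Finset.nonempty_iff_ne_empty.2 h
        have := h2 v hv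
        omega
      rw [this]; simp
  | succ M ih =>
    intro W
    simp only [toL, XL]
    rw [ncard_fiber (ColS_finite G μ (M + 1) W) (fun f => W.filter (fun v => f v = M + 1))
      (W.powersetCard (μ (M + 1)))]
    · push_cast
      apply Finset.sum_congr rfl
      intro T hT
      rw [Finset.mem_powersetCard] at hT
      split_ifs with hs
      · rw [← ih]
        congr 1
        apply ncard_bij (fun f v => if v ∈ T then 0 else f v)
          (fun f v => if v ∈ T then M + 1 else f v)
        · rintro f ⟨⟨h1, h2, h3, h4⟩, h5⟩
          have hT' : ∀ v, v ∈ T ↔ v ∈ W ∧ f v = M + 1 := by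
            intro v; rw [← h5]; simp
          refine ⟨?_, ?_, ?_, ?_⟩
          · intro v hv
            by_cases hvT : v ∈ T
            · simp [hvT]
            · simp only [hvT, if_false]
              apply h1
              intro hw; exact hv (Finset.mem_sdiff.2 ⟨hw, hvT⟩)
          · intro v hv
            rw [Finset.mem_sdiff] at hv
            have h6 := h2 v hv.1
            have h7 : f v ≠ M + 1 := fun h => hv.2 ((hT' v).2 ⟨hv.1, h⟩)
            simp only [hv.2, if_false]
            omega
          · intro u hu v hv
            rw [Finset.mem_sdiff] at hu hv
            simp only [hu.2, hv.2, if_false]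
            exact h3 u hu.1 v hv.1
          · intro i hi1 hi2
            rw [← h4 i hi1 (by omega)]
            congr 1
            ext v
            simp only [Finset.mem_filter, Finset.mem_sdiff]
            constructor
            · rintro ⟨⟨a, b⟩, c⟩
              rw [if_neg b] at c; exact ⟨a, c⟩
            · rintro ⟨a, c⟩
              have b : v ∉ T := by rw [hT']; intro h; omega
              rw [if_neg b]; exact ⟨⟨a, b⟩, c⟩
        · rintro f ⟨h1, h2, h3, h4⟩
          have key : W.filter (fun v => (if v ∈ T then M + 1 else f v) = M + 1) = T := by
            ext v
            simp only [Finset.mem_filter]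
            constructor
            · rintro ⟨a, b⟩
              by_contra hv
              rw [if_neg hv] at b
              have := h2 v (Finset.mem_sdiff.2 ⟨a, hv⟩)
              omega
            · intro hv
              exact ⟨hT.1 hv, by simp [hv]⟩
          refine ⟨⟨?_, ?_, ?_, ?_⟩, key⟩
          · intro v hv
            have : v ∉ T := fun h => hv (hT.1 h)
            simp only [this, if_false]
            exact h1 v (fun h => hv (Finset.mem_sdiff.1 h).1)
          · intro v hv
            by_cases hvT : v ∈ T
            · simp [hvT]
            · simp only [hvT, if_false]
              have := h2 v (Finset.mem_sdiff.2 ⟨hv, hvT⟩)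
              omega
          · intro u hu v hv hadj
            by_cases hvT : v ∈ T <;> by_cases huT : u ∈ T <;> simp only [hvT, huT, if_true, if_false]
            · exact absurd hadj (hs u huT v hvT)
            · have := h2 u (Finset.mem_sdiff.2 ⟨hu, huT⟩)
              omega
            · have := h2 v (Finset.mem_sdiff.2 ⟨hv, hvT⟩)
              omega
            · exact h3 u (Finset.mem_sdiff.2 ⟨hu, huT⟩) v (Finset.mem_sdiff.2 ⟨hv, hvT⟩) hadj
          · intro i hi1 hi2
            rcases Nat.lt_or_ge M i with hi | hi
            · have : i = M + 1 := by omega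
              subst this
              rw [key, hT.2]
            · rw [← h4 i hi1 hi]
              congr 1
              ext v
              simp only [Finset.mem_filter, Finset.mem_sdiff]
              constructor
              · rintro ⟨a, c⟩
                have b : v ∉ T := by intro h; rw [if_pos h] at c; omega
                rw [if_neg b] at c; exact ⟨⟨a, b⟩, c⟩
              · rintro ⟨⟨a, b⟩, c⟩
                rw [if_neg b]; exact ⟨a, c⟩
        · rintro f ⟨_, h5⟩
          funext v
          by_cases hv : v ∈ T
          · simp only [hv, if_true]
            rw [← h5] at hv
            simp at hv
            exact hv.2.symm
          · simp [hv]
        · rintro f ⟨h1, _⟩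
          funext v
          by_cases hv : v ∈ T
          · simp only [hv, if_true]
            exact (h1 v (fun h => (Finset.mem_sdiff.1 h).2 hv)).symm
          · simp [hv]
      · rw [Set.ncard_eq_zero (Set.Finite.subset (ColS_finite G μ (M + 1) W) (Set.sep_subset _ _)) |>.2]
        · simp
        · rw [Set.eq_empty_iff_forall_notMem]
          rintro f ⟨⟨h1, h2, h3, h4⟩, h5⟩
          apply hs
          intro u hu v hv hadj
          rw [← h5] at hu hv
          simp at hu hv
          exact h3 u hu.1 v hv.1 hadj (hu.2.trans hv.2.symm)
    · rintro f ⟨h1, h2, h3, h4⟩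
      rw [Finset.mem_powersetCard]
      exact ⟨Finset.filter_subset _ _, h4 _ (by omega) le_rfl⟩

lemma card_fib (f : V → ℕ) (i : ℕ) :
    Nat.card {v : V // f v = i} = (univ.filter (fun v => f v = i)).card := by
  rw [Nat.card_eq_fintype_card, Fintype.card_subtype]

lemma XCoeff_eq {μ : ℕ → ℕ} {M : ℕ} (h0 : μ 0 = 0) (hM : ∀ i, M < i → μ i = 0) :
    XCoeff G μ = XL G (toL μ M) univ := by
  rw [← ColS_card]
  unfold XCoeff
  congr 1
  change Nat.card ({f : V → ℕ | IsProperColoring G f ∧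
    ∀ i, Nat.card {v : V // f v = i} = μ i} : Set (V → ℕ)) = _
  rw [Nat.card_coe_set_eq]
  congr 1
  ext f
  simp only [Set.mem_setOf_eq, ColS, IsProperColoring, card_fib]
  constructor
  · rintro ⟨⟨h1, h2⟩, h3⟩
    refine ⟨by simp, ?_, fun u _ v _ => h2 u v, fun i _ _ => h3 i⟩
    intro v _
    refine ⟨h1 v, ?_⟩
    by_contra hlt
    have := h3 (f v)
    rw [hM _ (by omega), Finset.card_eq_zero] at this
    have hv : v ∈ univ.filter (fun w => f w = f v) := by simp
    rw [this] at hv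
    simp at hv
  · rintro ⟨_, h2, h3, h4⟩
    refine ⟨⟨fun v => (h2 v (by simp)).1, fun u v => h3 u (by simp) v (by simp)⟩, ?_⟩
    intro i
    by_cases hi : 1 ≤ i ∧ i ≤ M
    · exact h4 i hi.1 hi.2
    · have : μ i = 0 := by
        by_cases h : i = 0
        · rw [h, h0]
        · exact hM i (by omega)
      rw [this, Finset.card_eq_zero, Finset.filter_eq_empty_iff]
      intro v _ hv
      have := h2 v (by simp)
      omega

lemma XCoeff_good {μ : ℕ → ℕ} (h : XCoeff G μ ≠ 0) : μ 0 = 0 ∧ ∃ M, ∀ i, M < i → μ i = 0 := by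
  unfold XCoeff at h
  have h' : Nat.card {f : V → ℕ // IsProperColoring G f ∧
    ∀ i, Nat.card {v : V // f v = i} = μ i} ≠ 0 := by exact_mod_cast h
  obtain ⟨⟨f, ⟨h1, h2⟩, h3⟩⟩ := (Nat.card_ne_zero.1 h').1
  simp only [card_fib] at h3
  constructor
  · rw [← h3, Finset.card_eq_zero, Finset.filter_eq_empty_iff]
    intro v _ hv
    have := h1 v
    omega
  · refine ⟨univ.sup f, ?_⟩
    intro i hi
    rw [← h3, Finset.card_eq_zero, Finset.filter_eq_empty_iff]
    intro v _ hv
    have := Finset.le_sup (f := f) (Finset.mem_univ v)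
    omega

end Col

lemma XL_map {V V' : Type*} [DecidableEq V] [DecidableEq V'] (G : SimpleGraph V)
    (G' : SimpleGraph V') (φ : V' ↪ V) (hφ : ∀ u v, G'.Adj u v ↔ G.Adj (φ u) (φ v)) :
    ∀ (l : List ℕ) (W : Finset V'), XL G l (W.map φ) = XL G' l W := by
  intro l
  induction l with
  | nil => intro W; simp [XL]
  | cons a l ih =>
    intro W
    simp only [XL]
    rw [Finset.powersetCard_map, Finset.sum_map]
    apply Finset.sum_congr rfl
    intro T _
    have h1 : Stab G (T.map φ) ↔ Stab G' T := by
      simp [Stab, hφ]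
    simp only [Finset.mapEmbedding_apply, RelEmbedding.coe_toEmbedding, h1]
    rw [← Finset.map_sdiff, ih]

end

end GNet

namespace GNet

section

open Finset


/-! ### Tableaux -/

/-- Cells of a row-length sequence. -/
def Dg (κ : ℕ → ℕ) : Set Cell := {c | c.2 < κ c.1}

lemma mem_Dg {κ : ℕ → ℕ} {c : Cell} : c ∈ Dg κ ↔ c.2 < κ c.1 := Iff.rfl

lemma Dg_eq {N : ℕ} {κ : ℕ → ℕ} (h : IsP N κ) :
    Dg κ = (((range N).sigma (fun i => range (κ i))).map
      (Equiv.sigmaEquivProd ℕ ℕ).toEmbedding : Finset (ℕ × ℕ)) := by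
  ext ⟨i, j⟩
  simp only [mem_Dg, Finset.coe_map, Set.mem_image, Finset.mem_coe, Finset.mem_sigma,
    Finset.mem_range]
  constructor
  · intro hj
    refine ⟨⟨i, j⟩, ⟨?_, hj⟩, rfl⟩
    by_contra hi
    rw [h.zero (by simpa using hi)] at hj
    omega
  · rintro ⟨⟨a, b⟩, ⟨_, h2⟩, h3⟩
    simp [Equiv.sigmaEquivProd] at h3
    obtain ⟨rfl, rfl⟩ := h3
    exact h2

lemma Dg_finite {N : ℕ} {κ : ℕ → ℕ} (h : IsP N κ) : (Dg κ).Finite := by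
  rw [Dg_eq h]; exact Finset.finite_toSet _

lemma Dg_card {N : ℕ} {κ : ℕ → ℕ} (h : IsP N κ) : (Dg κ).ncard = N := by
  rw [Dg_eq h, Set.ncard_coe_finset, Finset.card_map, Finset.card_sigma]
  simp only [Finset.card_range]
  exact h.2.2

lemma Dg_sdiff {N N' : ℕ} {κ ν : ℕ → ℕ} (h : IsP N κ) (h' : IsP N' ν) (hle : ∀ i, ν i ≤ κ i) :
    (Dg κ \ Dg ν).ncard + N' = N := by
  have := Set.ncard_sdiff_add_ncard_of_subset (s := Dg ν) (t := Dg κ)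
    (fun c hc => lt_of_lt_of_le hc (hle _)) (Dg_finite h)
  rw [Dg_card h, Dg_card h'] at this
  exact this

/-- Semistandard tableaux with entries in `1..M`. -/
def TT (μ : ℕ → ℕ) (M : ℕ) (κ : ℕ → ℕ) : Set (Cell → ℕ) :=
  {t | (∀ c, c ∉ Dg κ → t c = 0) ∧ (∀ c ∈ Dg κ, 1 ≤ t c ∧ t c ≤ M) ∧
    (∀ i j : ℕ, ((i, j + 1) : Cell) ∈ Dg κ → t (i, j) ≤ t (i, j + 1)) ∧
    (∀ i j : ℕ, ((i + 1, j) : Cell) ∈ Dg κ → t (i, j) < t (i + 1, j)) ∧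
    ∀ i, 1 ≤ i → i ≤ M → {c | c ∈ Dg κ ∧ t c = i}.ncard = μ i}

lemma TT_finite {N : ℕ} {κ : ℕ → ℕ} (h : IsP N κ) (μ : ℕ → ℕ) (M : ℕ) : (TT μ M κ).Finite := by
  apply (finite_bdd (Dg κ) (Dg_finite h) M).subset
  rintro f ⟨h1, h2, _⟩
  exact ⟨h1, fun c hc => (h2 c hc).2⟩

/-- Initial segment length. -/
noncomputable def seg (P : ℕ → Prop) : ℕ := sInf {j | ¬ P j}

lemma lt_seg {P : ℕ → Prop} (h1 : ∃ j, ¬ P j) (h2 : ∀ j, P (j + 1) → P j) (j : ℕ) :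
    j < seg P ↔ P j := by
  constructor
  · intro h
    by_contra h'
    exact Nat.notMem_of_lt_sInf h h'
  · intro h
    by_contra h'
    have hm : ¬ P (seg P) := Nat.sInf_mem (s := {j | ¬ P j}) h1
    apply hm
    have : seg P ≤ j := by omega
    clear h' hm
    generalize seg P = s at this
    induction j with
    | zero => have : s = 0 := by omega
              rwa [this]
    | succ j ih =>
      by_cases hs : s = j + 1
      · rwa [hs]
      · exact ih (h2 j h) (by omega)

/-- Shape of the entries `≤ M`. -/
noncomputable def sh (M : ℕ) (κ : ℕ → ℕ) (t : Cell → ℕ) (i : ℕ) : ℕ :=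
  seg (fun j => j < κ i ∧ t (i, j) ≤ M)

lemma lt_sh {μ : ℕ → ℕ} {M : ℕ} {κ : ℕ → ℕ} {t : Cell → ℕ} (ht : t ∈ TT μ (M + 1) κ) (i j : ℕ) :
    j < sh M κ t i ↔ j < κ i ∧ t (i, j) ≤ M := by
  apply lt_seg (P := fun j => j < κ i ∧ t (i, j) ≤ M)
  · exact ⟨κ i, by simp⟩
  · rintro j ⟨h1, h2⟩
    have := ht.2.2.1 i j h1
    exact ⟨by omega, by omega⟩

/-- Restriction to a smaller shape. -/
noncomputable def rst (ν : ℕ → ℕ) (t : Cell → ℕ) : Cell → ℕ := fun c => if c ∈ Dg ν then t c else 0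

/-- Extension to a larger shape. -/
noncomputable def ext' (M : ℕ) (κ ν : ℕ → ℕ) (t : Cell → ℕ) : Cell → ℕ :=
  fun c => if c ∈ Dg ν then t c else if c ∈ Dg κ then M + 1 else 0

lemma sh_HS {μ : ℕ → ℕ} {M : ℕ} {κ : ℕ → ℕ} {t : Cell → ℕ} (ht : t ∈ TT μ (M + 1) κ)
    (ha : Antitone κ) : HS κ (sh M κ t) := by
  intro i
  constructor
  · by_contra h
    have := (lt_sh ht i (κ i)).1 (by omega)
    omega
  · by_contra h
    have h1 : sh M κ t i < κ (i + 1) := by omega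
    have h2 := ht.2.2.2.1 i (sh M κ t i) h1
    have h3 := (ht.2.1 (i + 1, sh M κ t i) h1).2
    have h4 := (lt_sh ht i (sh M κ t i)).2 ⟨lt_of_lt_of_le h1 (ha (by omega)), by omega⟩
    omega

lemma rst_mem {μ : ℕ → ℕ} {M : ℕ} {κ : ℕ → ℕ} {t : Cell → ℕ} (ht : t ∈ TT μ (M + 1) κ)
    (ha : Antitone κ) :
    rst (sh M κ t) t ∈ TT μ M (sh M κ t) := by
  have hlt := lt_sh ht
  obtain ⟨h1, h2, h3, h4, h5⟩ := ht
  refine ⟨?_, ?_, ?_, ?_, ?_⟩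
  · intro c hc
    exact if_neg hc
  · intro c hc
    have := (hlt c.1 c.2).1 hc
    have h6 := h2 c this.1
    simp only [rst]
    rw [if_pos hc]
    exact ⟨h6.1, this.2⟩
  · intro i j hc
    have hc' : j + 1 < sh M κ t i := hc
    simp only [rst]
    rw [if_pos (show (i, j) ∈ Dg (sh M κ t) by rw [mem_Dg]; simp only; omega), if_pos hc]
    exact h3 i j ((hlt i (j + 1)).1 hc').1
  · intro i j hc
    have hc' : j < sh M κ t (i + 1) := hc
    have h6 := (hlt (i + 1) j).1 hc'
    have h7 := h4 i j h6.1
    have h9 : j < κ i := lt_of_lt_of_le h6.1 (ha (by omega))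
    have h8 : j < sh M κ t i := (hlt i j).2 ⟨h9, by omega⟩
    simp only [rst]
    rw [if_pos (show (i, j) ∈ Dg (sh M κ t) from h8), if_pos hc]
    exact h7
  · intro i hi1 hi2
    rw [← h5 i hi1 (by omega)]
    congr 1
    ext c
    constructor
    · rintro ⟨a, b⟩
      simp only [rst] at b
      rw [if_pos a] at b
      exact ⟨((hlt c.1 c.2).1 a).1, b⟩
    · rintro ⟨a, b⟩
      have : c ∈ Dg (sh M κ t) := (hlt c.1 c.2).2 ⟨a, by change t c ≤ M; omega⟩
      refine ⟨this, ?_⟩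
      simp only [rst]
      rw [if_pos this, b]

lemma ext_mem {μ : ℕ → ℕ} {M N N' : ℕ} {κ ν : ℕ → ℕ} {t : Cell → ℕ} (ht : t ∈ TT μ M ν)
    (hκ : IsP N κ) (hν : IsP N' ν) (hs : HS κ ν) (hN : μ (M + 1) + N' = N) :
    ext' M κ ν t ∈ TT μ (M + 1) κ ∧ sh M κ (ext' M κ ν t) = ν := by
  obtain ⟨h1, h2, h3, h4, h5⟩ := ht
  have e1 : ∀ c, c ∈ Dg ν → ext' M κ ν t c = t c := fun c hc => if_pos hc
  have e2 : ∀ c, c ∉ Dg ν → c ∈ Dg κ → ext' M κ ν t c = M + 1 := by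
    intro c hc hc'; simp only [ext']; rw [if_neg hc, if_pos hc']
  have sub : ∀ c, c ∈ Dg ν → c ∈ Dg κ := fun c hc => lt_of_lt_of_le hc (hs c.1).1
  have hmem : ext' M κ ν t ∈ TT μ (M + 1) κ := by
    refine ⟨?_, ?_, ?_, ?_, ?_⟩
    · intro c hc
      simp only [ext']; rw [if_neg (fun h => hc (sub c h)), if_neg hc]
    · intro c hc
      by_cases h : c ∈ Dg ν
      · rw [e1 c h]; have := h2 c h; omega
      · rw [e2 c h hc]; omega
    · intro i j hc
      by_cases h : (i, j + 1) ∈ Dg ν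
      · have h' : (i, j) ∈ Dg ν := by rw [mem_Dg] at *; simp at *; omega
        rw [e1 _ h, e1 _ h']
        exact h3 i j h
      · rw [e2 _ h hc]
        by_cases h' : (i, j) ∈ Dg ν
        · rw [e1 _ h']; have := h2 _ h'; omega
        · rw [e2 _ h' (by rw [mem_Dg] at *; simp at *; omega)]
    · intro i j hc
      have h' : (i, j) ∈ Dg ν := lt_of_lt_of_le hc (hs i).2
      rw [e1 _ h']
      by_cases h : (i + 1, j) ∈ Dg ν
      · rw [e1 _ h]; exact h4 i j h
      · rw [e2 _ h hc]; have := h2 _ h'; omega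
    · intro i hi1 hi2
      rcases Nat.lt_or_ge M i with hi | hi
      · have hi' : i = M + 1 := by omega
        subst hi'
        have : {c | c ∈ Dg κ ∧ ext' M κ ν t c = M + 1} = Dg κ \ Dg ν := by
          ext c
          constructor
          · rintro ⟨a, b⟩
            refine ⟨a, fun h => ?_⟩
            rw [e1 c h] at b
            have := h2 c h
            omega
          · rintro ⟨a, b⟩
            exact ⟨a, e2 c b a⟩
        rw [this]
        have := Dg_sdiff hκ hν (fun i => (hs i).1)
        omega
      · rw [← h5 i hi1 hi]
        congr 1
        ext c
        constructor
        · rintro ⟨a, b⟩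
          have h : c ∈ Dg ν := by
            by_contra h
            rw [e2 c h a] at b
            omega
          exact ⟨h, by rw [← e1 c h]; exact b⟩
        · rintro ⟨a, b⟩
          exact ⟨sub c a, by rw [e1 c a]; exact b⟩
  refine ⟨hmem, ?_⟩
  funext i
  have key : ∀ j, j < sh M κ (ext' M κ ν t) i ↔ j < ν i := by
    intro j
    rw [lt_sh hmem]
    constructor
    · rintro ⟨a, b⟩
      by_contra h
      rw [e2 (i, j) h a] at b
      omega
    · intro h
      have h' : (i, j) ∈ Dg ν := h
      refine ⟨sub _ h', ?_⟩
      rw [e1 _ h']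
      exact (h2 _ h').2
  have k1 := key (ν i)
  have k2 := key (sh M κ (ext' M κ ν t) i)
  omega

lemma TT_card (μ : ℕ → ℕ) : ∀ (M N : ℕ) (κ : ℕ → ℕ), IsP N κ →
    ((TT μ M κ).ncard : ℚ) = K (toL μ M) κ := by
  intro M
  induction M with
  | zero =>
    intro N κ hκ
    simp only [toL, K]
    split_ifs with h
    · subst h
      have : TT μ 0 0 = {0} := by
        ext f
        constructor
        · rintro ⟨h, _⟩
          rw [Set.mem_singleton_iff]
          funext c; exact h c (by simp [mem_Dg])
        · intro hf
          rw [Set.mem_singleton_iff] at hf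
          subst hf
          refine ⟨by simp, ?_, by simp, ?_, ?_⟩
          · intro c hc; simp [mem_Dg] at hc
          · intro i j hc; simp [mem_Dg] at hc
          · intro i h1 h2; omega
      rw [this]; simp
    · have : TT μ 0 κ = ∅ := by
        rw [Set.eq_empty_iff_forall_notMem]
        rintro f ⟨_, h2, _⟩
        apply h
        funext i
        by_contra hi
        have := h2 (i, 0) (show 0 < κ i by simp at hi; omega)
        omega
      rw [this]; simp
  | succ M ih =>
    intro N κ hκ
    have hfin := TT_finite hκ μ (M + 1)
    -- basic facts about an element
    have basic : ∀ t ∈ TT μ (M + 1) κ, HS κ (sh M κ t) ∧ IsP (toL μ M).sum (sh M κ t) ∧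
        μ (M + 1) + (toL μ M).sum = N := by
      intro t ht
      have hs := sh_HS ht hκ.1
      have hr := rst_mem ht hκ.1
      have hP := (sub_IsP hκ hs.anti (fun i => (hs i).1)).1
      have hne : K (toL μ M) (sh M κ t) ≠ 0 := by
        rw [← ih _ _ hP]
        have := (Set.ncard_pos (TT_finite hP μ M)).2 ⟨_, hr⟩
        exact_mod_cast this.ne'
      have hP' := K_ne_IsP hne
      refine ⟨hs, hP', ?_⟩
      rw [← Dg_sdiff hκ hP' (fun i => (hs i).1), ← ht.2.2.2.2 (M + 1) (by omega) le_rfl]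
      congr 2
      ext c
      constructor
      · rintro ⟨a, b⟩
        refine ⟨a, fun h => ?_⟩
        have h' : t c ≤ M := ((lt_sh ht c.1 c.2).1 h).2
        omega
      · rintro ⟨a, b⟩
        refine ⟨a, ?_⟩
        have h1 := (ht.2.1 c a).2
        have h2 : ¬ t c ≤ M := fun h => b ((lt_sh ht c.1 c.2).2 ⟨a, h⟩)
        omega
    by_cases hN : μ (M + 1) + (toL μ M).sum = N
    · simp only [toL]
      rw [K_cons (by rw [hN]; exact hκ)]
      rw [ncard_fiber hfin (sh M κ) (PF (toL μ M).sum) (fun t ht => mem_PF.2 (basic t ht).2.1)]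
      push_cast
      apply Finset.sum_congr rfl
      intro ν hν
      have hνP := mem_PF.1 hν
      split_ifs with hs
      · rw [← ih _ _ hνP]
        congr 1
        apply ncard_bij (rst ν) (ext' M κ ν)
        · rintro t ⟨ht, rfl⟩
          exact rst_mem ht hκ.1
        · intro t ht
          exact ext_mem ht hκ hνP hs hN
        · rintro t ⟨ht, h⟩
          funext c
          simp only [ext', rst]
          by_cases hc : c ∈ Dg ν
          · simp [hc]
          · simp only [hc, if_false]
            by_cases hc' : c ∈ Dg κ
            · simp only [hc', if_true]
              have h1 := (ht.2.1 c hc').2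
              have h2 : ¬ t c ≤ M := fun h' => hc (by
                rw [← h]; exact (lt_sh ht c.1 c.2).2 ⟨hc', h'⟩)
              omega
            · simp only [hc', if_false]
              exact (ht.1 c hc').symm
        · intro t ht
          funext c
          simp only [ext', rst]
          by_cases hc : c ∈ Dg ν
          · simp [hc]
          · simp only [hc, if_false]
            exact (ht.1 c hc).symm
      · have : {t ∈ TT μ (M + 1) κ | sh M κ t = ν} = ∅ := by
          rw [Set.eq_empty_iff_forall_notMem]
          rintro t ⟨ht, rfl⟩
          exact hs (basic t ht).1
        rw [this]; simp
    · have : TT μ (M + 1) κ = ∅ := by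
        rw [Set.eq_empty_iff_forall_notMem]
        intro t ht
        exact hN (basic t ht).2.2
      rw [this, K_eq_zero hκ (by simpa [toL] using hN)]
      simp

end

end GNet

namespace GNet

section

open Finset


/-! ### Partitions as sequences -/

/-- The decreasing list of parts. -/
noncomputable def dl {N : ℕ} (lam : Nat.Partition N) : List ℕ := (lam.parts.sort (· ≤ ·)).reverse

lemma dl_coe {N : ℕ} (lam : Nat.Partition N) : ((dl lam : List ℕ) : Multiset ℕ) = lam.parts := by
  rw [dl, ← Multiset.coe_reverse, List.reverse_reverse, Multiset.sort_eq]

lemma dl_pw {N : ℕ} (lam : Nat.Partition N) : (dl lam).Pairwise (fun a b => b ≤ a) := by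
  rw [dl, List.pairwise_reverse]
  exact Multiset.pairwise_sort _ _

lemma rowLen_def {N : ℕ} (lam : Nat.Partition N) (i : ℕ) : rowLen lam i = (dl lam).getD i 0 := rfl

lemma dl_unique {N : ℕ} (lam : Nat.Partition N) (L : List ℕ) (hL : L.Pairwise (fun a b => b ≤ a))
    (hc : (L : Multiset ℕ) = lam.parts) : dl lam = L := by
  have hp : (dl lam).Perm L := by
    rw [← Multiset.coe_eq_coe, dl_coe, hc]
  exact hp.eq_of_pairwise (fun a b _ _ h1 h2 => le_antisymm h2 h1) (dl_pw lam) hL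

lemma dl_pos {N : ℕ} (lam : Nat.Partition N) {a : ℕ} (h : a ∈ dl lam) : 0 < a := by
  apply lam.parts_pos
  rw [← dl_coe]; exact h

lemma dl_sum {N : ℕ} (lam : Nat.Partition N) : (dl lam).sum = N := by
  rw [← Multiset.sum_coe, dl_coe, lam.parts_sum]

lemma rowLen_map {N : ℕ} (lam : Nat.Partition N) :
    (List.range (dl lam).length).map (rowLen lam) = dl lam := by
  apply List.ext_getElem
  · simp
  · intro i h1 h2
    simp only [List.getElem_map, List.getElem_range, rowLen_def]
    exact List.getD_eq_getElem _ _ h2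

lemma rowLen_IsP {N : ℕ} (lam : Nat.Partition N) : IsP N (rowLen lam) := by
  refine IsP.mk' (B := (dl lam).length) ?_ (List.getD_eq_default _ _ le_rfl) ?_
  · intro i j hij
    simp only [rowLen_def]
    by_cases hj : j < (dl lam).length
    · rw [List.getD_eq_getElem _ _ hj, List.getD_eq_getElem _ _ (by omega)]
      rcases hij.lt_or_eq with h | h
      · exact List.pairwise_iff_getElem.1 (dl_pw lam) i j (by omega) hj h
      · subst h; exact le_rfl
    · rw [List.getD_eq_default _ _ (by omega)]; omega
  · rw [← list_sum_range, rowLen_map, dl_sum]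

lemma rowLen_len {N : ℕ} (lam : Nat.Partition N) : len (rowLen lam) = (dl lam).length := by
  apply len_eq
  · exact List.getD_eq_default _ _ le_rfl
  · intro i hi
    rw [rowLen_def, List.getD_eq_getElem _ _ hi]
    exact (dl_pos lam (List.getElem_mem hi)).ne'

lemma rowLen_inj {N : ℕ} : Function.Injective (fun lam : Nat.Partition N => rowLen lam) := by
  intro lam lam' h
  simp only at h
  apply Nat.Partition.ext
  rw [← dl_coe, ← dl_coe, ← rowLen_map lam, ← rowLen_map lam', ← rowLen_len, ← rowLen_len, h]

lemma rowLen_surj {N : ℕ} {κ : ℕ → ℕ} (h : IsP N κ) : ∃ lam : Nat.Partition N, rowLen lam = κ := by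
  let L := (List.range (len κ)).map κ
  have hpos : ∀ {i}, i ∈ (L : Multiset ℕ) → 0 < i := by
    intro i hi
    simp only [L, Multiset.mem_coe, List.mem_map, List.mem_range] at hi
    obtain ⟨a, ha, rfl⟩ := hi
    exact Nat.pos_of_ne_zero (lt_len ha)
  have hsum : (L : Multiset ℕ).sum = N := by
    rw [Multiset.sum_coe, list_sum_range]
    exact h.sum (fun i hi => h.ge_len hi)
  refine ⟨⟨L, hpos, hsum⟩, ?_⟩
  have hdl := dl_unique ⟨L, hpos, hsum⟩ L ?_ rfl
  · funext i
    rw [rowLen_def, hdl]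
    by_cases hi : i < len κ
    · rw [List.getD_eq_getElem _ _ (by simpa [L] using hi)]
      simp [L]
    · rw [List.getD_eq_default _ _ (by simp [L]; omega), h.ge_len (by omega)]
  · simp only [L]
    rw [List.pairwise_map]
    exact List.pairwise_lt_range.imp (fun hab => h.1 hab.le)

lemma rowLen_app {N N' : ℕ} (lam : Nat.Partition N) (lam' : Nat.Partition N')
    (h : lam.parts = 1 ::ₘ lam'.parts) : rowLen lam = app (rowLen lam') := by
  have hdl := dl_unique lam (dl lam' ++ [1]) ?_ ?_
  · funext i
    rw [rowLen_def, hdl, app, rowLen_len]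
    rcases lt_trichotomy i (dl lam').length with hi | hi | hi
    · rw [Function.update_of_ne (by omega), rowLen_def, List.getD_append _ _ _ _ hi]
    · subst hi
      rw [Function.update_self, List.getD_append_right _ _ _ _ le_rfl]
      simp
    · rw [Function.update_of_ne (by omega), rowLen_def, List.getD_eq_default _ _ (by simp; omega),
        List.getD_eq_default _ _ (by omega)]
  · rw [List.pairwise_append]
    refine ⟨dl_pw _, by simp, ?_⟩
    intro a ha b hb
    simp at hb
    subst hb
    exact dl_pos _ ha
  · rw [h, ← dl_coe lam', Multiset.cons_coe]
    exact Multiset.coe_eq_coe.2 (List.perm_append_singleton _ _)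

lemma one_mem_of_app {N : ℕ} (lam : Nat.Partition N) {M : ℕ} {τ : ℕ → ℕ} (hτ : IsP M τ)
    (h : app τ = rowLen lam) : 1 ∈ lam.parts := by
  have h1 : rowLen lam (len τ) = 1 := by rw [← h, app, Function.update_self]
  rw [rowLen_def] at h1
  by_cases hi : len τ < (dl lam).length
  · rw [List.getD_eq_getElem _ _ hi] at h1
    rw [← dl_coe, Multiset.mem_coe, ← h1]
    exact List.getElem_mem hi
  · rw [List.getD_eq_default _ _ (by omega)] at h1
    omega

lemma removeOnes_parts {N : ℕ} (lam : Nat.Partition N) (t : ℕ) (h : t ≤ lam.parts.count 1) :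
    (removeOnes lam t).parts = lam.parts - Multiset.replicate t 1 := by
  have h' : Multiset.replicate t 1 ≤ lam.parts := Multiset.le_count_iff_replicate_le.1 h
  simp only [removeOnes]
  rw [dif_pos h']

/-! ### Schur functions -/

lemma schurFn_eq {N : ℕ} (lam : Nat.Partition N) {μ : ℕ → ℕ} {M : ℕ} (h0 : μ 0 = 0)
    (hM : ∀ i, M < i → μ i = 0) : schurFn lam μ = K (toL μ M) (rowLen lam) := by
  have hP := rowLen_IsP lam
  have hD : diag lam = Dg (rowLen lam) := rfl
  rw [← TT_card μ M N _ hP]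
  unfold schurFn
  congr 1
  change Nat.card ({t : Cell → ℕ | IsSSYT lam t ∧
    ∀ i, Nat.card ({c : Cell | c ∈ diag lam ∧ t c = i} : Set Cell) = μ i} : Set (Cell → ℕ)) = _
  rw [Nat.card_coe_set_eq]
  congr 1
  ext t
  simp only [Nat.card_coe_set_eq, IsSSYT, hD]
  have hfin : ∀ i, {c : Cell | c ∈ Dg (rowLen lam) ∧ t c = i}.Finite :=
    fun i => (Dg_finite hP).subset (fun c hc => hc.1)
  constructor
  · rintro ⟨⟨h1, h2, h3, h4⟩, h5⟩
    refine ⟨h1, ?_, h3, h4, fun i _ _ => h5 i⟩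
    intro c hc
    refine ⟨h2 c hc, ?_⟩
    by_contra hlt
    have := h5 (t c)
    rw [hM _ (by omega), Set.ncard_eq_zero (hfin _)] at this
    have hv : c ∈ {c' : Cell | c' ∈ Dg (rowLen lam) ∧ t c' = t c} := ⟨hc, rfl⟩
    rw [this] at hv
    exact hv
  · rintro ⟨h1, h2, h3, h4, h5⟩
    refine ⟨⟨h1, fun c hc => (h2 c hc).1, h3, h4⟩, ?_⟩
    intro i
    by_cases hi : 1 ≤ i ∧ i ≤ M
    · exact h5 i hi.1 hi.2
    · have : μ i = 0 := by
        by_cases h : i = 0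
        · rw [h, h0]
        · exact hM i (by omega)
      rw [this, Set.ncard_eq_zero (hfin _), Set.eq_empty_iff_forall_notMem]
      rintro c ⟨hc, hci⟩
      have := h2 c hc
      omega

lemma schurFn_good {N : ℕ} (lam : Nat.Partition N) {μ : ℕ → ℕ} (h : schurFn lam μ ≠ 0) :
    μ 0 = 0 ∧ ∃ M, ∀ i, M < i → μ i = 0 := by
  have hP := rowLen_IsP lam
  have hD : diag lam = Dg (rowLen lam) := rfl
  unfold schurFn at h
  have h' : Nat.card {t : Cell → ℕ // IsSSYT lam t ∧
    ∀ i, Nat.card ({c : Cell | c ∈ diag lam ∧ t c = i} : Set Cell) = μ i} ≠ 0 := by exact_mod_cast h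
  obtain ⟨⟨t, ⟨h1, h2, h3, h4⟩, h5⟩⟩ := (Nat.card_ne_zero.1 h').1
  simp only [Nat.card_coe_set_eq, hD] at h5 h2
  have hfin : ∀ i, {c : Cell | c ∈ Dg (rowLen lam) ∧ t c = i}.Finite :=
    fun i => (Dg_finite hP).subset (fun c hc => hc.1)
  constructor
  · rw [← h5, Set.ncard_eq_zero (hfin _), Set.eq_empty_iff_forall_notMem]
    rintro c ⟨hc, hci⟩
    have := h2 c hc
    omega
  · refine ⟨(Dg_finite hP).toFinset.sup t, ?_⟩
    intro i hi
    rw [← h5, Set.ncard_eq_zero (hfin _), Set.eq_empty_iff_forall_notMem]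
    rintro c ⟨hc, hci⟩
    have := Finset.le_sup (f := t) ((Dg_finite hP).mem_toFinset.2 hc)
    omega

lemma sum_part {N : ℕ} (F : (ℕ → ℕ) → ℚ) :
    ∑ ν : Nat.Partition N, F (rowLen ν) = ∑ κ ∈ PF N, F κ := by
  apply Finset.sum_bij (fun ν _ => rowLen ν)
  · intro ν _; exact mem_PF.2 (rowLen_IsP ν)
  · intro a _ b _ h; exact rowLen_inj h
  · intro κ hκ
    obtain ⟨lam, h⟩ := rowLen_surj (mem_PF.1 hκ)
    exact ⟨lam, Finset.mem_univ _, h⟩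
  · intro _ _; rfl

lemma sCoeff_eq {V V' : Type*} [DecidableEq V] [Fintype V'] (G : SimpleGraph V)
    (G' : SimpleGraph V') (φ : V' ↪ V) (hφ : ∀ u v, G'.Adj u v ↔ G.Adj (φ u) (φ v))
    (W : Finset V) (hW : univ.map φ = W) {N : ℕ} (hN : W.card = N) (lam : Nat.Partition N) :
    sCoeff (XCoeff G') lam = cf G W (rowLen lam) := by
  have hX : ∀ (μ : ℕ → ℕ) (M : ℕ), μ 0 = 0 → (∀ i, M < i → μ i = 0) →
      XCoeff G' μ = ∑ κ ∈ PF N, cf G W κ * K (toL μ M) κ := by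
    intro μ M h0 hM
    rw [XCoeff_eq G' h0 hM, ← XL_map G G' φ hφ, hW, cf_spec G hN]
  have hex : ∃ c : Nat.Partition N →₀ ℚ, ∀ μ, XCoeff G' μ = c.sum fun ν a => a * schurFn ν μ := by
    refine ⟨Finsupp.equivFunOnFinite.symm (fun ν => cf G W (rowLen ν)), ?_⟩
    intro μ
    rw [Finsupp.sum_fintype _ _ (by simp)]
    simp only [Finsupp.equivFunOnFinite_symm_apply_apply]
    by_cases hg : μ 0 = 0 ∧ ∃ M, ∀ i, M < i → μ i = 0
    · obtain ⟨h0, M, hM⟩ := hg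
      rw [hX μ M h0 hM, ← sum_part]
      apply Finset.sum_congr rfl
      intro ν _
      rw [schurFn_eq ν h0 hM]
    · have h1 : XCoeff G' μ = 0 := by
        by_contra h; exact hg (XCoeff_good G' h)
      rw [h1, eq_comm]
      apply Finset.sum_eq_zero
      intro ν _
      have : schurFn ν μ = 0 := by
        by_contra h; exact hg (schurFn_good ν h)
      rw [this, mul_zero]
  unfold sCoeff
  rw [dif_pos hex]
  have hc := hex.choose_spec
  set c := hex.choose with hcdef
  have : Nonempty (Nat.Partition N) := ⟨lam⟩
  let inv : (ℕ → ℕ) → Nat.Partition N := Function.invFun (fun lam => rowLen lam)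
  have hinv : ∀ ν, inv (rowLen ν) = ν := fun ν => Function.leftInverse_invFun rowLen_inj ν
  have := K_unique (N := N) (fun κ => c (inv κ) - cf G W κ) ?_ (rowLen lam)
    (mem_PF.2 (rowLen_IsP lam))
  · simp only [hinv] at this
    linarith
  · intro l _
    obtain ⟨μ, M, h0, hM, rfl⟩ := toL_surj l
    have h1 := hc μ
    rw [Finsupp.sum_fintype _ _ (by simp), hX μ M h0 hM] at h1
    simp only [sub_mul, Finset.sum_sub_distrib]
    rw [h1, ← sum_part (fun κ => c (inv κ) * K (toL μ M) κ), sub_eq_zero]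
    apply Finset.sum_congr rfl
    intro ν _
    rw [hinv, schurFn_eq ν h0 hM]

end

end GNet

namespace GNet

section

open Finset


lemma map_univ_eq {n m : ℕ} {V' : Type*} [Fintype V'] (φ : V' ↪ Fin n ⊕ Fin m)
    (S : Finset (Fin n ⊕ Fin m)) (h : ∀ u, φ u ∉ S) (hc : n + m ≤ Fintype.card V' + S.card) :
    univ.map φ = univ \ S := by
  apply Finset.eq_of_subset_of_card_le
  · intro v hv
    rw [Finset.mem_map] at hv
    obtain ⟨u, _, rfl⟩ := hv
    simp [h u]
  · rw [card_univ_sdiff, Finset.card_map, Finset.card_univ]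
    omega

lemma sC_univ {n m : ℕ} (lam : Nat.Partition (n + m)) :
    sCoeff (XCoeff (genNet n m)) lam = cf (genNet n m) univ (rowLen lam) := by
  apply sCoeff_eq _ _ (Function.Embedding.refl _) (fun _ _ => Iff.rfl) _ (by simp)
  simp

lemma sA_val {n : ℕ} (a : Fin (n + 1)) (i : Fin n) :
    ((a.succAbove i : Fin (n + 1)) : ℕ) = if (i : ℕ) < a then (i : ℕ) else i + 1 := by
  simp only [Fin.succAbove, Fin.lt_def, Fin.val_castSucc]
  split_ifs <;> simp

lemma sA_eq {n m : ℕ} (a : Fin (n + 1)) (b : Fin (m + 1)) (h : (a : ℕ) = b) (i : Fin n) (k : Fin m) :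
    ((a.succAbove i : Fin (n + 1)) : ℕ) = (b.succAbove k : Fin (m + 1)) ↔ (i : ℕ) = k := by
  rw [sA_val, sA_val, h]
  split_ifs <;> omega

lemma sC_buoy {n m : ℕ} (hmn : m ≤ n + 1) (b : Fin (n + 1)) (hb : m ≤ b)
    (lam : Nat.Partition (n + 1 + m - 1)) :
    sCoeff (XCoeff (genNet n m)) lam =
      cf (genNet (n + 1) m) (univ \ {Sum.inl b}) (rowLen lam) := by
  refine sCoeff_eq _ _ ⟨Sum.map b.succAbove id,
    Sum.map_injective.2 ⟨Fin.succAbove_right_injective, Function.injective_id⟩⟩ ?_ _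
    (map_univ_eq _ _ ?_ ?_) (by rw [card_univ_sdiff]; simp) lam
  · have key : ∀ (i : Fin n) (k : Fin m), (i : ℕ) = k ↔ ((b.succAbove i : Fin (n + 1)) : ℕ) = k := by
      intro i k
      rw [sA_val]
      have := k.2
      split_ifs <;> omega
    rintro (i | i) (k | k)
    · simp [gn_ll]
    · simp [gn_lr, key]
    · simp [gn_rl, key]
    · simp [gn_rr]
  · rintro (i | i)
    · simp [Fin.succAbove_ne]
    · simp
  · simp; omega

lemma sC_pair {n m : ℕ} (hmn : m + 1 ≤ n + 1) (j : Fin (m + 1))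
    (lam : Nat.Partition (n + 1 + (m + 1) - 2)) :
    sCoeff (XCoeff (genNet n m)) lam =
      cf (genNet (n + 1) (m + 1)) (univ \ {Sum.inl (anc hmn j), Sum.inr j}) (rowLen lam) := by
  have hc : ({Sum.inl (anc hmn j), Sum.inr j} : Finset (Fin (n + 1) ⊕ Fin (m + 1))).card = 2 := by
    rw [Finset.card_pair]; simp
  refine sCoeff_eq _ _ ⟨Sum.map (anc hmn j).succAbove j.succAbove,
    Sum.map_injective.2 ⟨Fin.succAbove_right_injective, Fin.succAbove_right_injective⟩⟩ ?_ _
    (map_univ_eq _ _ ?_ ?_) (by rw [card_univ_sdiff, hc]) lam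
  · have key := sA_eq (n := n) (m := m) (anc hmn j) j (by simp [anc])
    rintro (i | i) (k | k)
    · simp [gn_ll]
    · simp [gn_lr, key]
    · simp [gn_rl, key]
    · simp [gn_rr]
  · rintro (i | i)
    · simp [Fin.succAbove_ne]
    · simp [Fin.succAbove_ne]
  · rw [hc]; simp; omega

/-- The embedding of the disjoint union. -/
def duMap {n m : ℕ} (a : Fin (n + 1)) (j : Fin (m + 1)) :
    (Fin n ⊕ Fin m) ⊕ Fin 1 → Fin (n + 1) ⊕ Fin (m + 1)
  | Sum.inl (Sum.inl i) => Sum.inl (a.succAbove i)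
  | Sum.inl (Sum.inr k) => Sum.inr (j.succAbove k)
  | Sum.inr _ => Sum.inr j

lemma duMap_inj {n m : ℕ} (a : Fin (n + 1)) (j : Fin (m + 1)) : Function.Injective (duMap a j) := by
  rintro ((i | i) | i) ((k | k) | k) h <;> simp [duMap, Fin.succAbove_ne, Fin.ne_succAbove] at h ⊢
  · exact h
  · exact h
  · exact Subsingleton.elim _ _

lemma sC_anchor {n m : ℕ} (hmn : m + 1 ≤ n + 1) (j : Fin (m + 1))
    (lam : Nat.Partition (n + 1 + (m + 1) - 1)) :
    sCoeff (XCoeff (disjUnion (genNet n m) K1)) lam =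
      cf (genNet (n + 1) (m + 1)) (univ \ {Sum.inl (anc hmn j)}) (rowLen lam) := by
  refine sCoeff_eq _ _ ⟨duMap (anc hmn j) j, duMap_inj _ _⟩ ?_ _
    (map_univ_eq _ _ ?_ ?_) (by rw [card_univ_sdiff]; simp) lam
  · have key := sA_eq (n := n) (m := m) (anc hmn j) j (by simp [anc])
    have hv : ∀ i : Fin n, (((anc hmn j).succAbove i : Fin (n + 1)) : ℕ) ≠ j := by
      intro i h
      exact Fin.succAbove_ne (anc hmn j) i (Fin.ext (by rw [h]; simp [anc]))
    have hl : ∀ u v : Fin n ⊕ Fin m, (disjUnion (genNet n m) K1).Adj (Sum.inl u) (Sum.inl v) ↔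
        (genNet n m).Adj u v := by
      intro u v
      simp only [_root_.disjUnion, SimpleGraph.fromRel_adj]
      constructor
      · rintro ⟨_, h | h⟩
        · exact h
        · exact h.symm
      · intro h
        exact ⟨fun h' => h.ne (Sum.inl_injective h'), Or.inl h⟩
    have hlr : ∀ (u : Fin n ⊕ Fin m) (v : Fin 1),
        ¬ (disjUnion (genNet n m) K1).Adj (Sum.inl u) (Sum.inr v) := by
      intro u v
      simp [_root_.disjUnion, SimpleGraph.fromRel_adj]
    have hrr : ∀ (u v : Fin 1),
        ¬ (disjUnion (genNet n m) K1).Adj (Sum.inr u) (Sum.inr v) := by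
      intro u v
      simp [_root_.disjUnion, SimpleGraph.fromRel_adj, K1]
    have hrl : ∀ (u : Fin n ⊕ Fin m) (v : Fin 1),
        ¬ (disjUnion (genNet n m) K1).Adj (Sum.inr v) (Sum.inl u) :=
      fun u v h => hlr u v h.symm
    rintro ((i | i) | i) ((k | k) | k)
    · simp [hl, gn_ll, duMap]
    · simp [hl, gn_lr, duMap, key]
    · simp [hlr, gn_lr, duMap, hv]
    · simp [hl, gn_rl, duMap, key]
    · simp [hl, gn_rr, duMap]
    · simp [hlr, gn_rr, duMap]
    · simp [hrl, gn_rl, duMap, hv]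
    · simp [hrl, gn_rr, duMap]
    · simp [hrr, gn_rr, duMap]
  · rintro ((i | i) | i) <;> simp [duMap, Fin.succAbove_ne]
  · simp; omega

lemma sum_split {n m : ℕ} (hmn : m ≤ n) (A B : ℚ) :
    ∑ i : Fin n, (if (i : ℕ) < m then A else B) = m * A + ((n - m : ℕ) : ℚ) * B := by
  rw [Fin.sum_univ_eq_sum_range (fun i => if i < m then A else B) n]
  obtain ⟨k, rfl⟩ := Nat.exists_eq_add_of_le hmn
  rw [Finset.sum_range_add]
  have h1 : ∀ i ∈ range m, (if i < m then A else B) = A := by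
    intro i hi; rw [if_pos (Finset.mem_range.1 hi)]
  rw [Finset.sum_congr rfl h1]
  simp

end

end GNet

/-- For `n ≥ m ≥ 1` and a partition `lam` of `n + m` whose smallest
part is `1`:
`[s_lam] X_{GN_{n,m}} = m·[s_{lam∖1}] X_{GN_{n-1,m-1} ⊔ K₁}
  + (n-m)·[s_{lam∖1}] X_{GN_{n-1,m}} + m·A`,
where `A = [s_{lam∖1²}] X_{GN_{n-1,m-1}}` if `lam` has at least two parts equal to
`1`, and `A = 0` otherwise. -/
theorem schurCoeff_genNet_recurrence (n m : ℕ) (hm : 1 ≤ m) (hmn : m ≤ n)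
    (lam : Nat.Partition (n + m)) (hlast : 1 ∈ lam.parts) :
    sCoeff (XCoeff (genNet n m)) lam =
      (m : ℚ) * sCoeff (XCoeff (disjUnion (genNet (n - 1) (m - 1)) K1))
          (removeOnes lam 1)
      + ((n - m : ℕ) : ℚ) * sCoeff (XCoeff (genNet (n - 1) m)) (removeOnes lam 1)
      + (m : ℚ) * (if 2 ≤ lam.parts.count 1
          then sCoeff (XCoeff (genNet (n - 1) (m - 1))) (removeOnes lam 2)
          else 0) := by
  obtain ⟨n, rfl⟩ : ∃ k, n = k + 1 := ⟨n - 1, by omega⟩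
  obtain ⟨m, rfl⟩ : ∃ k, m = k + 1 := ⟨m - 1, by omega⟩
  have hcount : 1 ≤ lam.parts.count 1 := Multiset.one_le_count_iff_mem.2 hlast
  have hp1 := GNet.removeOnes_parts lam 1 hcount
  have hcons : lam.parts = 1 ::ₘ (removeOnes lam 1).parts := by
    rw [hp1, Multiset.replicate_one, Multiset.sub_singleton, Multiset.cons_erase hlast]
  have happ := GNet.rowLen_app lam (removeOnes lam 1) hcons
  rw [GNet.sC_univ, happ, GNet.gn_rec hmn (by omega) _
    (GNet.mem_PF.2 (GNet.rowLen_IsP (removeOnes lam 1)))]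
  congr 1
  · rw [← GNet.sum_split hmn]
    unfold GNet.CC1
    apply Finset.sum_congr rfl
    intro i _
    split_ifs with hi
    · have e : i = GNet.anc hmn ⟨i, hi⟩ := Fin.ext (by simp [GNet.anc])
      have := GNet.sC_anchor hmn ⟨i, hi⟩ (removeOnes lam 1)
      rw [← e] at this
      exact this.symm
    · exact (GNet.sC_buoy hmn i (by omega) (removeOnes lam 1)).symm
  · split_ifs with h2
    · have hp2 := GNet.removeOnes_parts lam 2 h2
      have hcons2 : (removeOnes lam 1).parts = 1 ::ₘ (removeOnes lam 2).parts := by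
        have hmem : 1 ∈ lam.parts.erase 1 := by
          rw [← Multiset.one_le_count_iff_mem, Multiset.count_erase_self]
          omega
        rw [hp1, hp2, show (2 : ℕ) = 1 + 1 from rfl, Multiset.replicate_add, ← tsub_tsub,
          Multiset.replicate_one, Multiset.sub_singleton, Multiset.sub_singleton,
          Multiset.cons_erase hmem]
      have happ2 := GNet.rowLen_app _ _ hcons2
      have hP2 := GNet.rowLen_IsP (removeOnes lam 2)
      rw [Finset.sum_eq_single (rowLen (removeOnes lam 2))]
      · rw [if_pos happ2.symm]
        unfold GNet.CC2
        rw [Finset.sum_congr rfl (fun j _ => (GNet.sC_pair hmn j (removeOnes lam 2)).symm)]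
        simp
      · intro τ hτ hne
        rw [if_neg]
        intro h
        rw [happ2] at h
        exact hne ((GNet.mem_PF.1 hτ).app_inj hP2 h)
      · intro h
        exact absurd (GNet.mem_PF.2 hP2) h
    · rw [mul_zero]
      apply Finset.sum_eq_zero
      intro τ hτ
      rw [if_neg]
      intro h
      apply h2
      have := GNet.one_mem_of_app _ (GNet.mem_PF.1 hτ) h
      rw [hcons, Multiset.count_cons_self]
      have := Multiset.one_le_count_iff_mem.2 this
      omega
end

section
/- Let n ≥ 1 and n ≥ m ≥ 0, and let λ = (λ_1, ..., λ_k) be a partition of n+m whose smallest part λ_k is at least 2. If the coefficient [s_λ]X_{GN_{n,m}} is nonzero, then n = m and λ = (2^n) (the partition with n parts all equal to 2). -/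
open scoped Classical

lemma rowLen_eq_zero_iff {N : ℕ} (lam : Nat.Partition N) (i : ℕ) :
    rowLen lam i = 0 ↔ numRows lam ≤ i := by
  unfold rowLen numRows
  constructor
  · intro h
    by_contra hlt
    push Not at hlt
    have hl : i < ((lam.parts.sort (· ≤ ·)).reverse).length := by simpa using hlt
    rw [List.getD_eq_getElem _ _ hl] at h
    have hm := List.getElem_mem hl
    rw [h] at hm
    simp only [List.mem_reverse, Multiset.mem_sort] at hm
    exact absurd (lam.parts_pos hm) (by omega)
  · intro h
    exact List.getD_eq_default _ _ (by simpa using h)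

lemma rowLen_le {N : ℕ} (lam : Nat.Partition N) (i : ℕ) : rowLen lam i ≤ N := by
  unfold rowLen
  by_cases hl : i < ((lam.parts.sort (· ≤ ·)).reverse).length
  · rw [List.getD_eq_getElem _ _ hl]
    have hm := List.getElem_mem hl
    simp only [List.mem_reverse, Multiset.mem_sort] at hm
    conv_rhs => rw [← lam.parts_sum]
    exact Multiset.single_le_sum (fun _ _ => Nat.zero_le _) _ hm
  · rw [List.getD_eq_default _ _ (by omega)]
    omega

lemma rowLen_inj {N : ℕ} (a b : Nat.Partition N) (h : ∀ i, rowLen a i = rowLen b i) :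
    a = b := by
  have hlen : numRows a = numRows b := by
    apply le_antisymm
    · rw [← rowLen_eq_zero_iff, h, rowLen_eq_zero_iff]
    · rw [← rowLen_eq_zero_iff, ← h, rowLen_eq_zero_iff]
  have hl : (a.parts.sort (· ≤ ·)).reverse = (b.parts.sort (· ≤ ·)).reverse := by
    apply List.ext_getElem
    · simpa [numRows] using hlen
    · intro i h1 h2
      have := h i
      unfold rowLen at this
      rwa [List.getD_eq_getElem _ _ h1, List.getD_eq_getElem _ _ h2] at this
  have hs := List.reverse_injective hl
  apply Nat.Partition.ext
  rw [← Multiset.sort_eq a.parts (· ≤ ·), ← Multiset.sort_eq b.parts (· ≤ ·), hs]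

/-- The diagram as a finset. -/
noncomputable def dfin {N : ℕ} (lam : Nat.Partition N) : Finset Cell :=
  (Finset.range (numRows lam) ×ˢ Finset.range N).filter fun c => c ∈ diag lam

lemma mem_dfin {N : ℕ} (lam : Nat.Partition N) (c : Cell) : c ∈ dfin lam ↔ c ∈ diag lam := by
  unfold dfin
  simp only [Finset.mem_filter, Finset.mem_product, Finset.mem_range, and_iff_right_iff_imp]
  intro h
  have h' : c.2 < rowLen lam c.1 := h
  have h1 := rowLen_le lam c.1
  have h2 := rowLen_eq_zero_iff lam c.1
  constructor <;> omega

lemma card_fiber {N : ℕ} (lam : Nat.Partition N) (t : Cell → ℕ) (i : ℕ) :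
    Nat.card {c : Cell // c ∈ diag lam ∧ t c = i} = ((dfin lam).val.map t).count i := by
  rw [Multiset.count_map, ← Finset.filter_val, Finset.card_val]
  rw [← Nat.card_eq_finsetCard]
  apply Nat.card_congr
  apply Equiv.subtypeEquivRight
  intro c
  rw [Finset.mem_filter, mem_dfin]
  exact and_congr_right fun _ => eq_comm

/-- The weight of the superstandard tableau. -/
def wt {N : ℕ} (lam : Nat.Partition N) (i : ℕ) : ℕ := if i = 0 then 0 else rowLen lam (i - 1)

lemma card_super {N : ℕ} (lam : Nat.Partition N) (i : ℕ) :
    Nat.card {c : Cell // c ∈ diag lam ∧ c.1 + 1 = i} = wt lam i := by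
  unfold wt
  split_ifs with h
  · subst h
    simp
  · rw [← Nat.card_fin (rowLen lam (i - 1))]
    apply Nat.card_congr
    refine ⟨fun c => ⟨c.1.2, ?_⟩, fun j => ⟨(i - 1, j), ?_, ?_⟩, ?_, ?_⟩
    · have h1 : c.1.2 < rowLen lam c.1.1 := c.2.1
      have h2 := c.2.2
      have h3 : c.1.1 = i - 1 := by omega
      rwa [h3] at h1
    · exact j.2
    · show i - 1 + 1 = i
      omega
    · rintro ⟨⟨a, b⟩, h1, h2⟩
      simp only [Subtype.mk.injEq, Prod.mk.injEq, and_true]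
      simp only at h2
      omega
    · intro j
      rfl

lemma row_le {N : ℕ} (lam : Nat.Partition N) (t : Cell → ℕ) (ht : IsSSYT lam t)
    (hdown : ∀ i, rowLen lam (i + 1) ≤ rowLen lam i) :
    ∀ i j, ((i, j) : Cell) ∈ diag lam → i + 1 ≤ t (i, j) := by
  intro i
  induction i with
  | zero => intro j h; exact ht.2.1 _ h
  | succ i ih =>
    intro j h
    have h' : j < rowLen lam (i + 1) := h
    have h1 := ih j (show j < rowLen lam i from lt_of_lt_of_le h' (hdown i))
    have h2 := ht.2.2.2 i j h
    omega

lemma rowLen_anti {N : ℕ} (lam : Nat.Partition N) (i : ℕ) :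
    rowLen lam (i + 1) ≤ rowLen lam i := by
  unfold rowLen
  by_cases hl : i + 1 < ((lam.parts.sort (· ≤ ·)).reverse).length
  · rw [List.getD_eq_getElem _ _ hl, List.getD_eq_getElem _ _ (by omega)]
    have hs : ((lam.parts.sort (· ≤ ·)).reverse).Pairwise (fun a b => b ≤ a) := by
      rw [List.pairwise_reverse]
      exact Multiset.pairwise_sort _ _
    exact List.pairwise_iff_getElem.1 hs i (i + 1) (by omega) hl (by omega)
  · rw [List.getD_eq_default _ _ (by omega)]
    omega

/-- The potential. -/
noncomputable def pot {N : ℕ} (lam : Nat.Partition N) : ℕ := ∑ c ∈ dfin lam, (c.1 + 1)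

lemma schurFn_pos {N : ℕ} (lam : Nat.Partition N) : schurFn lam (wt lam) ≠ 0 := by
  unfold schurFn
  rw [Nat.cast_ne_zero, ← Nat.pos_iff_ne_zero]
  rw [Nat.card_pos_iff]
  constructor
  · refine ⟨fun c => if c ∈ diag lam then c.1 + 1 else 0, ⟨?_, ?_, ?_, ?_⟩, ?_⟩
    · intro c hc; simp [hc]
    · intro c hc; simp [hc]
    · intro i j h
      have h' : ((i, j) : Cell) ∈ diag lam :=
        lt_trans (Nat.lt_succ_self j) (show j + 1 < rowLen lam i from h)
      simp [h, h']
    · intro i j h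
      have h' : ((i, j) : Cell) ∈ diag lam :=
        lt_of_lt_of_le (show j < rowLen lam (i + 1) from h) (rowLen_anti lam i)
      simp [h, h']
    · intro i
      rw [← card_super]
      apply Nat.card_congr
      apply Equiv.subtypeEquivRight
      intro c
      constructor
      · rintro ⟨h, h2⟩; simp only [h, if_true] at h2; exact ⟨h, h2⟩
      · rintro ⟨h, h2⟩; simp only [h, if_true]; exact ⟨trivial, h2⟩
  · have hb : ∀ t : {t : Cell → ℕ // IsSSYT lam t ∧
        ∀ i, Nat.card {c : Cell // c ∈ diag lam ∧ t c = i} = wt lam i}, ∀ c, 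
        t.1 c < numRows lam + 1 := by
      rintro ⟨t, ht, hw⟩ c
      by_contra hc
      push Not at hc
      have hd : c ∈ diag lam := by
        by_contra hd
        have := ht.1 c hd
        simp only at hc
        omega
      have h1 := hw (t c)
      have h0 : wt lam (t c) = 0 := by
        unfold wt
        split_ifs
        · rfl
        · rw [rowLen_eq_zero_iff]; simp only at hc; omega
      rw [h0, card_fiber, Multiset.count_eq_zero] at h1
      exact h1 (Multiset.mem_map_of_mem t ((mem_dfin lam c).2 hd))
    let F : {t : Cell → ℕ // IsSSYT lam t ∧
        ∀ i, Nat.card {c : Cell // c ∈ diag lam ∧ t c = i} = wt lam i} →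
        (dfin lam → Fin (numRows lam + 1)) := fun t c => ⟨t.1 c, hb t c⟩
    apply Finite.of_injective F
    intro s t hst
    apply Subtype.ext
    funext c
    by_cases hc : c ∈ diag lam
    · have := congrFun hst ⟨c, (mem_dfin lam c).2 hc⟩
      simpa [F] using this
    · rw [s.2.1.1 c hc, t.2.1.1 c hc]

lemma schurFn_tri {N : ℕ} (a b : Nat.Partition N) (h : schurFn a (wt b) ≠ 0) :
    numRows a ≤ numRows b ∧ pot a ≤ pot b ∧ (pot a = pot b → a = b) := by
  unfold schurFn at h
  rw [Nat.cast_ne_zero, ← Nat.pos_iff_ne_zero, Nat.card_pos_iff] at h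
  obtain ⟨⟨t, ht, hw⟩⟩ := h.1
  have hrow : ∀ c ∈ dfin a, c.1 + 1 ≤ t c := fun c hc =>
    row_le a t ht (rowLen_anti a) c.1 c.2 ((mem_dfin a c).1 hc)
  have hms : (dfin a).val.map t = (dfin b).val.map (fun c => c.1 + 1) := by
    apply Multiset.ext.2
    intro i
    rw [← card_fiber, ← card_fiber, hw i, card_super]
  have hsum : ∑ c ∈ dfin a, t c = pot b := by
    unfold pot
    rw [Finset.sum, Finset.sum, hms]
  refine ⟨?_, ?_, ?_⟩
  · rcases Nat.eq_zero_or_pos (numRows a) with h0 | h0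
    · omega
    · have hd : ((numRows a - 1, 0) : Cell) ∈ diag a := by
        show 0 < rowLen a (numRows a - 1)
        have := rowLen_eq_zero_iff a (numRows a - 1)
        omega
      have h1 := hrow _ ((mem_dfin a _).2 hd)
      have h2 := hw (t (numRows a - 1, 0))
      have h3 : wt b (t (numRows a - 1, 0)) ≠ 0 := by
        intro h3
        rw [h3, card_fiber, Multiset.count_eq_zero] at h2
        exact h2 (Multiset.mem_map_of_mem t ((mem_dfin a _).2 hd))
      unfold wt at h3
      rcases Nat.eq_zero_or_pos (t (numRows a - 1, 0)) with h4 | h4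
      · exact absurd (if_pos h4) h3
      rw [if_neg (by omega)] at h3
      have h5 := rowLen_eq_zero_iff b (t (numRows a - 1, 0) - 1)
      simp only at h1
      omega
  · rw [← hsum]
    exact Finset.sum_le_sum hrow
  · intro he
    rw [← hsum] at he
    have heq := (Finset.sum_eq_sum_iff_of_le hrow).1 he
    apply rowLen_inj
    intro i
    have h1 := hw (i + 1)
    rw [card_fiber, ← Multiset.map_congr rfl heq, ← card_fiber a (fun c => c.1 + 1),
      card_super] at h1
    simpa [wt] using h1

lemma XCoeff_zero (n m : ℕ) (lam : Nat.Partition (n + m)) (h : numRows lam < n) :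
    XCoeff (genNet n m) (wt lam) = 0 := by
  unfold XCoeff
  rw [Nat.cast_eq_zero]
  rw [Nat.card_eq_zero]
  left
  constructor
  rintro ⟨f, ⟨hpos, hadj⟩, hw⟩
  have hb : ∀ i : Fin n, f (Sum.inl i) - 1 < numRows lam := by
    intro i
    by_contra hc
    push Not at hc
    have h1 := hw (f (Sum.inl i))
    have hp := hpos (Sum.inl i)
    rw [wt, if_neg (by omega), (rowLen_eq_zero_iff _ _).2 hc, Nat.card_eq_zero] at h1
    rcases h1 with h1 | h1
    · exact h1.false ⟨Sum.inl i, rfl⟩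
    · exact h1.not_finite inferInstance
  let F : Fin n → Fin (numRows lam) := fun i => ⟨f (Sum.inl i) - 1, hb i⟩
  have hF : Function.Injective F := by
    intro i j hij
    by_contra hne
    have h1 : f (Sum.inl i) - 1 = f (Sum.inl j) - 1 := by simpa [F] using hij
    refine hadj (Sum.inl i) (Sum.inl j) ?_ ?_
    · simp [genNet, SimpleGraph.fromRel_adj, hne]
    · have := hpos (Sum.inl i)
      have := hpos (Sum.inl j)
      omega
  have := Fintype.card_le_of_injective F hF
  simp at this
  omega

/-- For `n ≥ 1`, `n ≥ m ≥ 0`, and a partition `lam` of `n + m` all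
of whose parts are at least `2`: if `[s_lam] X_{GN_{n,m}} ≠ 0` then `n = m` and
`lam = (2^n)`. -/
theorem schurCoeff_genNet_ne_zero_of_no_ones (n m : ℕ) (hn : 1 ≤ n) (hm : m ≤ n)
    (lam : Nat.Partition (n + m)) (hmin : 1 ∉ lam.parts)
    (hne : sCoeff (XCoeff (genNet n m)) lam ≠ 0) :
    n = m ∧ lam.parts = Multiset.replicate n 2 := by
  have hlen : n ≤ numRows lam := by
    unfold sCoeff at hne
    split_ifs at hne with hex
    · have hc := hex.choose_spec
      set c := hex.choose
      by_contra hlt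
      push Not at hlt
      obtain ⟨b, hb, hbmin⟩ := Finset.exists_min_image
        (c.support.filter fun ν => numRows ν < n) pot
        ⟨lam, by simp [hne, hlt]⟩
      simp only [Finset.mem_filter, Finsupp.mem_support_iff] at hb hbmin
      have h1 := hc (wt b)
      rw [XCoeff_zero n m b hb.2, Finsupp.sum, Finset.sum_eq_single b] at h1
      · exact mul_ne_zero hb.1 (schurFn_pos b) h1.symm
      · intro a ha hab
        by_contra hz
        obtain ⟨h2, h3, h4⟩ := schurFn_tri a b (right_ne_zero_of_mul hz)
        exact hab (h4 (le_antisymm h3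
          (hbmin a ⟨Finsupp.mem_support_iff.1 ha, by omega⟩)))
      · intro hb'
        exact absurd (Finsupp.mem_support_iff.2 hb.1) hb'
    · exact absurd rfl hne
  have h2 : ∀ p ∈ lam.parts, 2 ≤ p := by
    intro p hp
    have := lam.parts_pos hp
    have : p ≠ 1 := fun h => hmin (h ▸ hp)
    omega
  have hs := Multiset.card_nsmul_le_sum h2
  rw [lam.parts_sum, smul_eq_mul] at hs
  unfold numRows at hlen
  have hnm : n = m := by omega
  refine ⟨hnm, Multiset.eq_replicate.2 ⟨by omega, ?_⟩⟩
  intro p hp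
  obtain ⟨s, hs'⟩ := Multiset.exists_cons_of_mem hp
  have h3 := Multiset.card_nsmul_le_sum (s := s) (a := 2)
    (fun q hq => h2 q (by rw [hs']; exact Multiset.mem_cons_of_mem hq))
  have h4 := lam.parts_sum
  have h5 := h2 p hp
  rw [hs', Multiset.sum_cons] at h4
  rw [hs', Multiset.card_cons] at hlen
  rw [smul_eq_mul] at h3
  omega
end
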